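/- arXiv:1308.6117 — 4 statements merged into one kernel-verified Lean document; each statement's English description precedes it below -/
import Mathlib

section
/- Let A be a unital C*-algebra and (X, ‖·‖_X) a quasi-normed A-bimodule with modulus of concavity C ≥ 1 (no completeness of X is assumed). Then every derivation δ : A → X is bounded, i.e. there exists K ≥ 0 such that ‖δ(a)‖_X ≤ K‖a‖_A for all a ∈ A. -/
open MulOpposite

/-!
Ringrose's argument, with the quasi-norm in place of a norm. The ideal `J` of all `a` for which
`x ↦ δ (x * a)` is bounded is two-sided by the Leibniz rule and closed by uniform boundedness. A
square-summable sequence in `J` has a common right factor in `J`, so `δ` is bounded on `J`. A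
gliding hump shows that a sequence in `A ⧸ J` of pairwise orthogonal elements has a term with square
zero. Hence real functions of a self-adjoint element of `A ⧸ J` live on a finite set, and
projections satisfy the descending chain condition; so `1` is a finite sum of projections with
one-dimensional corners, and `A ⧸ J` is finite-dimensional. Finally, a linear map that is bounded on
a closed subspace of finite codimension is bounded.
-/

section QuasiSeminorm

/-- `q` is a quasi-seminorm with modulus of concavity `C`: a quasi-norm for which `q x = 0` need not
force `x = 0`. -/
structure IsQuasiSeminorm (𝕜 : Type*) {X : Type*} [NormedField 𝕜] [AddCommGroup X] [Module 𝕜 X]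
    (q : X → ℝ) (C : ℝ) : Prop where
  one_le : 1 ≤ C
  nonneg : ∀ x, 0 ≤ q x
  smul : ∀ (c : 𝕜) (x : X), q (c • x) = ‖c‖ * q x
  add : ∀ x y, q (x + y) ≤ C * (q x + q y)

/-- The linear map `T` is bounded from the norm of `E` to `q`. -/
def IsQuasiBounded {𝕜 E X : Type*} [NormedField 𝕜] [SeminormedAddCommGroup E] [Module 𝕜 E]
    [AddCommGroup X] [Module 𝕜 X] (q : X → ℝ) (T : E →ₗ[𝕜] X) : Prop :=
  ∃ K : ℝ, 0 ≤ K ∧ ∀ x, q (T x) ≤ K * ‖x‖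

namespace IsQuasiSeminorm

variable {𝕜 X : Type*} [NormedField 𝕜] [AddCommGroup X] [Module 𝕜 X] {q : X → ℝ} {C : ℝ}

lemma pos (hq : IsQuasiSeminorm 𝕜 q C) : 0 < C := one_pos.trans_le hq.one_le

lemma map_zero (hq : IsQuasiSeminorm 𝕜 q C) : q 0 = 0 := by
  simpa using hq.smul 0 0

lemma map_neg (hq : IsQuasiSeminorm 𝕜 q C) (x : X) : q (-x) = q x := by
  simpa using hq.smul (-1) x

lemma sub (hq : IsQuasiSeminorm 𝕜 q C) (x y : X) : q (x - y) ≤ C * (q x + q y) := by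
  simpa only [sub_eq_add_neg, hq.map_neg] using hq.add x (-y)

lemma le_of_sub (hq : IsQuasiSeminorm 𝕜 q C) (x y : X) : q x ≤ C * (q y + q (x - y)) := by
  simpa only [add_sub_cancel] using hq.add y (x - y)

end IsQuasiSeminorm

section Bounded

open Filter Topology

variable {𝕜 E F X : Type*} [NontriviallyNormedField 𝕜] [NormedAddCommGroup E] [NormedSpace 𝕜 E]
  [NormedAddCommGroup F] [NormedSpace 𝕜 F] [AddCommGroup X] [Module 𝕜 X] {q : X → ℝ} {C : ℝ}

lemma IsQuasiBounded.comp {T : F →ₗ[𝕜] X} (hT : IsQuasiBounded q T) (S : E →L[𝕜] F) :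
    IsQuasiBounded q (T ∘ₗ S.toLinearMap) := by
  obtain ⟨K, hK, hT⟩ := hT
  refine ⟨K * ‖S‖, by positivity, fun x => (hT _).trans ?_⟩
  rw [mul_assoc]
  exact mul_le_mul_of_nonneg_left (S.le_opNorm x) hK

namespace IsQuasiSeminorm

lemma isQuasiBounded_of_sub_le (hq : IsQuasiSeminorm 𝕜 q C) {S T : E →ₗ[𝕜] X}
    (hT : IsQuasiBounded q T) {M : ℝ} (hM : 0 ≤ M) (h : ∀ x, q (S x - T x) ≤ M * ‖x‖) :
    IsQuasiBounded q S := by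
  obtain ⟨K, hK, hT⟩ := hT
  have hC := hq.pos
  refine ⟨C * (K + M), by positivity, fun x => (hq.le_of_sub _ (T x)).trans ?_⟩
  rw [mul_assoc, add_mul]
  gcongr
  exacts [hT x, h x]

lemma isQuasiBounded_add (hq : IsQuasiSeminorm 𝕜 q C) {S T : E →ₗ[𝕜] X} (hS : IsQuasiBounded q S)
    (hT : IsQuasiBounded q T) : IsQuasiBounded q (S + T) := by
  obtain ⟨K, hK, hS⟩ := hS
  exact hq.isQuasiBounded_of_sub_le hT hK fun x => by simpa using hS x

lemma isQuasiBounded_zero (hq : IsQuasiSeminorm 𝕜 q C) : IsQuasiBounded q (0 : E →ₗ[𝕜] X) :=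
  ⟨0, le_rfl, fun x => by simp [hq.map_zero]⟩

lemma le_mul_norm_of_forall_norm_lt (hq : IsQuasiSeminorm 𝕜 q C) {T : E →ₗ[𝕜] X} {r D : ℝ}
    (hr : 0 < r) {c : 𝕜} (hc : 1 < ‖c‖) (h : ∀ x, ‖x‖ < r → q (T x) ≤ D) (x : E) :
    q (T x) ≤ D * (r⁻¹ * ‖c‖) * ‖x‖ := by
  rcases eq_or_ne x 0 with rfl | hx
  · simp [hq.map_zero]
  obtain ⟨d, hd, hdx, -, hd_inv⟩ := rescale_to_shell hc hr hx
  calc q (T x) = ‖d‖⁻¹ * q (T (d • x)) := by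
        rw [map_smul, hq.smul, inv_mul_cancel_left₀ (norm_ne_zero_iff.2 hd)]
    _ ≤ r⁻¹ * ‖c‖ * ‖x‖ * D := mul_le_mul hd_inv (h _ hdx) (hq.nonneg _) (by positivity)
    _ = D * (r⁻¹ * ‖c‖) * ‖x‖ := by ring

lemma exists_lt_of_not_isQuasiBounded (hq : IsQuasiSeminorm 𝕜 q C) {T : E →ₗ[𝕜] X}
    (hT : ¬ IsQuasiBounded q T) {r : ℝ} (hr : 0 < r) (M : ℝ) : ∃ x, ‖x‖ < r ∧ M < q (T x) := by
  by_contra! hM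
  obtain ⟨c, hc⟩ := NormedField.exists_one_lt_norm 𝕜
  have hM₀ : 0 ≤ M := (hq.nonneg _).trans (hM 0 (by simpa using hr))
  exact hT ⟨M * (r⁻¹ * ‖c‖), by positivity, hq.le_mul_norm_of_forall_norm_lt hr hc hM⟩

lemma le_of_mem_closure (hq : IsQuasiSeminorm 𝕜 q C) {T : E →ₗ[𝕜] X} (hT : IsQuasiBounded q T)
    {s : Set E} {M : ℝ} (hM : ∀ x ∈ s, q (T x) ≤ M) {x : E} (hx : x ∈ closure s) :
    q (T x) ≤ C * (M + 1) := by
  have hC := hq.pos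
  obtain ⟨K, hK, hT⟩ := hT
  obtain ⟨y, hy, hxy⟩ := Metric.mem_closure_iff.1 hx (K + 1)⁻¹ (by positivity)
  have hsub : q (T x - T y) ≤ 1 := calc
    q (T x - T y) ≤ K * dist x y := by simpa only [map_sub, dist_eq_norm] using hT (x - y)
    _ ≤ (K + 1) * (K + 1)⁻¹ := by gcongr; linarith
    _ = 1 := mul_inv_cancel₀ (by positivity)
  refine (hq.le_of_sub _ (T y)).trans ?_
  gcongr
  exact hM y hy

theorem banach_steinhaus [CompleteSpace E] (hq : IsQuasiSeminorm 𝕜 q C) {ι : Type*}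
    {T : ι → E →ₗ[𝕜] X} (hT : ∀ i, IsQuasiBounded q (T i))
    (hpt : ∀ x, ∃ M : ℝ, ∀ i, q (T i x) ≤ M) :
    ∃ K : ℝ, 0 ≤ K ∧ ∀ i x, q (T i x) ≤ K * ‖x‖ := by
  have hC := hq.pos
  -- `q` need not be continuous, so Baire's theorem is applied to the closures of the sublevel sets.
  let S : ℕ → Set E := fun m => {x | ∀ i, q (T i x) ≤ m}
  have hcover : ⋃ m, closure (S m) = Set.univ := Set.eq_univ_of_forall fun x => by
    obtain ⟨M, hM⟩ := hpt x
    obtain ⟨m, hm⟩ := exists_nat_ge M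
    exact Set.mem_iUnion.2 ⟨m, subset_closure fun i => (hM i).trans hm⟩
  obtain ⟨m, x₀, hx₀⟩ := nonempty_interior_of_iUnion_of_closed (fun m => isClosed_closure) hcover
  obtain ⟨r, hr, hball⟩ := Metric.isOpen_iff.1 isOpen_interior x₀ hx₀
  have hbound : ∀ i, ∀ x ∈ interior (closure (S m)), q (T i x) ≤ C * (m + 1) := fun i x hx =>
    hq.le_of_mem_closure (hT i) (fun _ (hy : _ ∈ S m) => hy i) (interior_subset hx)
  obtain ⟨c, hc⟩ := NormedField.exists_one_lt_norm 𝕜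
  refine ⟨C * (C * (m + 1) + C * (m + 1)) * (r⁻¹ * ‖c‖), by positivity, fun i =>
    hq.le_mul_norm_of_forall_norm_lt hr hc fun x hx => ?_⟩
  calc q (T i x) = q (T i (x₀ + x) - T i x₀) := by rw [← map_sub, add_sub_cancel_left]
    _ ≤ C * (q (T i (x₀ + x)) + q (T i x₀)) := hq.sub _ _
    _ ≤ C * (C * (m + 1) + C * (m + 1)) := by
        gcongr
        exacts [hbound i _ (hball (by simpa using hx)), hbound i _ hx₀]

theorem isQuasiBounded_of_tendsto [CompleteSpace E] (hq : IsQuasiSeminorm 𝕜 q C)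
    {T : ℕ → E →ₗ[𝕜] X} {S : E →ₗ[𝕜] X} (hT : ∀ n, IsQuasiBounded q (T n))
    (hlim : ∀ x, Tendsto (fun n => q (S x - T n x)) atTop (𝓝 0)) :
    IsQuasiBounded q S := by
  have hC := hq.pos
  obtain ⟨K, hK, hbound⟩ := hq.banach_steinhaus hT fun x => by
    obtain ⟨R, hR⟩ := (hlim x).bddAbove_range
    refine ⟨C * (q (S x) + R), fun n => (hq.le_of_sub _ (S x)).trans ?_⟩
    rw [← hq.map_neg (T n x - S x), neg_sub]
    gcongr
    exact hR ⟨n, rfl⟩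
  refine ⟨C * K, by positivity, fun x => ?_⟩
  have hle : ∀ n, q (S x) ≤ C * (K * ‖x‖ + q (S x - T n x)) := fun n =>
    (hq.le_of_sub _ (T n x)).trans (by gcongr; exact hbound n x)
  simpa only [add_zero, mul_assoc] using
    ge_of_tendsto' (((hlim x).const_add (K * ‖x‖)).const_mul C) hle

lemma isQuasiBounded_of_finiteDimensional [CompleteSpace 𝕜] [FiniteDimensional 𝕜 E]
    (hq : IsQuasiSeminorm 𝕜 q C) (T : E →ₗ[𝕜] X) : IsQuasiBounded q T := by
  let b := Module.finBasis 𝕜 E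
  have hT : T = ∑ i, (b.coord i).smulRight (T (b i)) := b.ext fun j => by
    simp [Finsupp.single_apply, ite_smul]
  rw [hT]
  refine Finset.sum_induction _ (IsQuasiBounded q) (fun _ _ => hq.isQuasiBounded_add)
    hq.isQuasiBounded_zero fun i _ => ?_
  let φ := LinearMap.toContinuousLinearMap (b.coord i)
  refine ⟨‖φ‖ * q (T (b i)), mul_nonneg (norm_nonneg _) (hq.nonneg _), fun x => ?_⟩
  rw [LinearMap.smulRight_apply, hq.smul, mul_right_comm]
  exact mul_le_mul_of_nonneg_right (φ.le_opNorm x) (hq.nonneg _)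

theorem isQuasiBounded_of_finiteDimensional_quotient [CompleteSpace 𝕜]
    (hq : IsQuasiSeminorm 𝕜 q C) {V : Submodule 𝕜 E} (hV : IsClosed (V : Set E))
    [FiniteDimensional 𝕜 (E ⧸ V)] {T : E →ₗ[𝕜] X}
    (hT : IsQuasiBounded q (T ∘ₗ V.subtype)) :
    IsQuasiBounded q T := by
  obtain ⟨P, hP⟩ := Submodule.ClosedComplemented.of_finiteDimensional_quotient hV
  let T₁ := (T ∘ₗ V.subtype) ∘ₗ P.toLinearMap
  have hker : V ≤ (T - T₁).ker := fun v hv => by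
    simp [T₁, hP ⟨v, hv⟩]
  have hsplit : T = T₁ + V.liftQ (T - T₁) hker ∘ₗ V.mkQL.toLinearMap := by
    ext x
    simp
  rw [hsplit]
  exact hq.isQuasiBounded_add (hT.comp P) ((hq.isQuasiBounded_of_finiteDimensional _).comp _)

end IsQuasiSeminorm

end Bounded

end QuasiSeminorm

section ClosedIdeals

open Filter Topology

variable {A : Type*} [CStarAlgebra A]

lemma exists_tendsto_mul_sq {d : A} (hd : IsSelfAdjoint d) :
    ∃ x : ℕ → A, (∀ n, IsSelfAdjoint (x n)) ∧
      Tendsto (fun n => x n * d ^ 2) atTop (𝓝 d) := by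
  let ε : ℕ → ℝ := fun n => 1 / (n + 1)
  have hε : ∀ n, 0 < ε n := fun n => Nat.one_div_pos_of_nat
  let g : ℕ → ℝ → ℝ := fun n t => t / (t ^ 2 + ε n ^ 2)
  have hpos : ∀ n t, 0 < t ^ 2 + ε n ^ 2 := fun n t => by have := hε n; positivity
  have hg : ∀ n, Continuous (g n) := fun n =>
    continuous_id.div (by fun_prop) fun t => (hpos n t).ne'
  refine ⟨fun n => cfc (g n) d, fun n => cfc_predicate _ _, ?_⟩
  rw [tendsto_iff_norm_sub_tendsto_zero]
  refine squeeze_zero (fun n => norm_nonneg _) (fun n => ?_)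
    tendsto_one_div_add_atTop_nhds_zero_nat
  have hcfc : cfc (g n) d * d ^ 2 - d = cfc (fun t => g n t * t ^ 2 - t) d := by
    rw [cfc_sub (fun t => g n t * t ^ 2) (fun t => t) d ((hg n).mul (by fun_prop)).continuousOn,
      cfc_mul (g n) (· ^ 2) d (hg n).continuousOn, cfc_pow_id (R := ℝ) d 2, cfc_id' ℝ d]
  rw [hcfc]
  refine norm_cfc_le (hε n).le fun t _ => ?_
  have hval : g n t * t ^ 2 - t = -(t * ε n * ε n / (t ^ 2 + ε n ^ 2)) := by
    have := (hpos n t).ne'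
    simp only [g]
    field_simp
    ring
  rw [hval, norm_neg, norm_div, norm_mul, Real.norm_of_nonneg (hpos n t).le,
    Real.norm_of_nonneg (hε n).le, div_le_iff₀ (hpos n t), mul_comm (ε n)]
  gcongr
  rw [norm_mul, Real.norm_of_nonneg (hε n).le, Real.norm_eq_abs, ← sq_abs t]
  nlinarith [sq_nonneg (|t| - ε n), sq_nonneg |t|, sq_nonneg (ε n)]

lemma mem_of_sq_mem {J : Ideal A} (hJ : IsClosed (J : Set A)) {d : A} (hd : IsSelfAdjoint d)
    (hdJ : d ^ 2 ∈ J) : d ∈ J := by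
  obtain ⟨x, -, hx⟩ := exists_tendsto_mul_sq hd
  exact hJ.mem_of_tendsto hx (.of_forall fun n => J.mul_mem_left (x n) hdJ)

section Order

variable [PartialOrder A] [StarOrderedRing A]

lemma norm_mul_le_norm_mul_of_star_mul_self_le {a b : A} (h : star a * a ≤ star b * b) (x : A) :
    ‖a * x‖ ≤ ‖b * x‖ := by
  have hconj : ∀ y : A, ‖star x * (star y * y) * x‖ = ‖y * x‖ * ‖y * x‖ := fun y => by
    rw [← CStarRing.norm_star_mul_self, star_mul]
    simp only [mul_assoc]
  rw [mul_self_le_mul_self_iff (norm_nonneg _) (norm_nonneg _), ← hconj, ← hconj]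
  exact CStarAlgebra.norm_le_norm_of_nonneg_of_le
    (star_left_conjugate_nonneg (star_mul_self_nonneg a) x) (star_left_conjugate_le_conjugate h x)

theorem exists_eq_mul_of_star_mul_self_le_pow_four {a d : A} (hd : IsSelfAdjoint d)
    (ha : star a * a ≤ d ^ 4) : ∃ c, a = c * d ∧ ‖c‖ ≤ ‖d‖ := by
  obtain ⟨x, hx, hlim⟩ := exists_tendsto_mul_sq hd
  have hle : ∀ y, ‖a * y‖ ≤ ‖d ^ 2 * y‖ := norm_mul_le_norm_mul_of_star_mul_self_le <| by
    rwa [(hd.pow 2).star_eq, ← pow_add]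
  have hlim' : Tendsto (fun n => d ^ 2 * x n) atTop (𝓝 d) := by
    simpa only [star_mul, (hd.pow 2).star_eq, (hx _).star_eq, hd.star_eq] using hlim.star
  have hcauchy : CauchySeq fun n => a * x n := by
    rw [cauchySeq_iff_tendsto_dist_atTop_0]
    refine squeeze_zero (fun _ => dist_nonneg) (fun n => ?_)
      (cauchySeq_iff_tendsto_dist_atTop_0.1 hlim'.cauchySeq)
    simpa only [dist_eq_norm, mul_sub] using hle (x n.1 - x n.2)
  obtain ⟨c, hc⟩ := cauchySeq_tendsto_of_complete hcauchy
  refine ⟨c, tendsto_nhds_unique ?_ (hc.mul_const d),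
    le_of_tendsto_of_tendsto' hc.norm hlim'.norm fun n => hle (x n)⟩
  rw [tendsto_iff_norm_sub_tendsto_zero]
  refine squeeze_zero (fun n => norm_nonneg _) (fun n => ?_)
    (tendsto_iff_norm_sub_tendsto_zero.1 (sq d ▸ hlim'.mul_const d))
  simpa only [mul_sub, mul_one, mul_assoc, sq] using hle (x n * d - 1)

lemma exists_isSelfAdjoint_pow_four_eq {J : Ideal A} (hJ : IsClosed (J : Set A)) {s : A}
    (hs : 0 ≤ s) (hsJ : s ∈ J) : ∃ d ∈ J, IsSelfAdjoint d ∧ d ^ 4 = s := by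
  have hr := CFC.sqrt_nonneg s
  have hd := CFC.sqrt_nonneg (CFC.sqrt s)
  refine ⟨CFC.sqrt (CFC.sqrt s), ?_, .of_nonneg hd, ?_⟩
  · refine mem_of_sq_mem hJ (.of_nonneg hd) ?_
    rw [CFC.sq_sqrt _ hr]
    exact mem_of_sq_mem hJ (.of_nonneg hr) (by rwa [CFC.sq_sqrt _ hs])
  · rw [show 4 = 2 * 2 from rfl, pow_mul, CFC.sq_sqrt _ hr, CFC.sq_sqrt _ hs]

end Order

theorem mem_of_star_mul_self_mem {J : Ideal A} (hJ : IsClosed (J : Set A)) {a : A}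
    (ha : star a * a ∈ J) : a ∈ J := by
  let _ := CStarAlgebra.spectralOrder A
  have := CStarAlgebra.spectralOrderedRing A
  obtain ⟨d, hdJ, hd, hda⟩ := exists_isSelfAdjoint_pow_four_eq hJ (star_mul_self_nonneg a) ha
  obtain ⟨c, rfl, -⟩ := exists_eq_mul_of_star_mul_self_le_pow_four hd hda.ge
  exact J.mul_mem_left c hdJ

theorem star_mem_of_isClosed {J : Ideal A} [J.IsTwoSided] (hJ : IsClosed (J : Set A)) {a : A}
    (ha : a ∈ J) : star a ∈ J :=
  mem_of_star_mul_self_mem hJ (by simpa using J.mul_mem_right (star a) ha)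

theorem exists_common_right_factor {J : Ideal A} (hJ : IsClosed (J : Set A)) {ι : Type*}
    {a : ι → A} (ha : ∀ i, a i ∈ J) (hsum : Summable fun i => ‖a i‖ ^ 2) :
    ∃ d ∈ J, ∀ i, ∃ c, a i = c * d ∧ ‖c‖ ≤ ‖d‖ := by
  let _ := CStarAlgebra.spectralOrder A
  have := CStarAlgebra.spectralOrderedRing A
  have hs : Summable fun i => star (a i) * a i :=
    .of_norm <| hsum.congr fun i => by rw [CStarRing.norm_star_mul_self, sq]
  have hmem : ∑' i, star (a i) * a i ∈ J :=
    tsum_mem hJ fun i => J.mul_mem_left _ (ha i)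
  obtain ⟨d, hdJ, hd, hd_eq⟩ :=
    exists_isSelfAdjoint_pow_four_eq hJ (tsum_nonneg fun i => star_mul_self_nonneg (a i)) hmem
  refine ⟨d, hdJ, fun i => exists_eq_mul_of_star_mul_self_le_pow_four hd ?_⟩
  rw [hd_eq]
  exact hs.le_tsum i fun j _ => star_mul_self_nonneg (a j)

end ClosedIdeals

section ContinuousFunctions

/-- Every sequence of pairwise orthogonal elements of `B` contains an element with square zero. -/
def OrthogonallyFinite (B : Type*) [Mul B] [Zero B] : Prop :=
  ∀ b : ℕ → B, Pairwise (fun j k => b j * b k = 0) → ∃ j, b j * b j = 0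

/-- The star projections of `B` onto which `x` restricts as a nonzero real scalar. -/
def eigenprojections {B : Type*} [Mul B] [Star B] [SMul ℝ B] (x : B) : Set B :=
  {f | IsStarProjection f ∧ ∃ t : ℝ, t ≠ 0 ∧ x * f = t • f}

variable {X B : Type*} [TopologicalSpace X] [T2Space X]

lemma exists_eqOn_iff_of_isClosed_ker [CompactSpace X] {𝕜 : Type*} [RCLike 𝕜] [Ring B]
    (ψ : C(X, 𝕜) →+* B) (hψ : IsClosed (RingHom.ker ψ : Set C(X, 𝕜))) :
    ∃ F : Set X, ∀ u v, ψ u = ψ v ↔ Set.EqOn u v F := by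
  refine ⟨(ContinuousMap.setOfIdeal (RingHom.ker ψ))ᶜ, fun u v => ?_⟩
  rw [← sub_eq_zero, ← map_sub, ← RingHom.mem_ker,
    ← ContinuousMap.idealOfSet_ofIdeal_isClosed hψ, ContinuousMap.mem_idealOfSet]
  simp only [ContinuousMap.sub_apply, sub_eq_zero, Set.EqOn,
    ContinuousMap.idealOfSet_ofIdeal_isClosed hψ]

lemma exists_seq_continuousMap_orthogonal [NormalSpace X] {F : Set X} (hF : F.Infinite) :
    ∃ f : ℕ → C(X, ℝ), (Pairwise fun j k => Set.EqOn (f j * f k) 0 F) ∧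
      ∀ n, ∃ x ∈ F, f n x = 1 := by
  have : Infinite F := hF.to_subtype
  obtain ⟨U, hUinf, hUo, hUd⟩ := exists_seq_infinite_isOpen_pairwise_disjoint F
  choose x hx using fun n => (hUinf n).nonempty
  choose V hVo hVU using fun n => isOpen_induced_iff.1 (hUo n)
  have hmem : ∀ n (t : F), (t : X) ∈ V n ↔ t ∈ U n := fun n t => by rw [← hVU n, Set.mem_preimage]
  choose f hf₀ hf₁ _ using fun n => exists_continuous_zero_one_of_isClosed (hVo n).isClosed_compl
    (isClosed_singleton (x := (x n : X))) (by simpa using (hmem n (x n)).2 (hx n))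
  refine ⟨f, fun j k hjk t ht => ?_, fun n => ⟨x n, (x n).2, hf₁ n rfl⟩⟩
  by_cases htj : t ∈ V j
  · have htk : t ∉ V k := fun htk =>
      Set.disjoint_left.1 (hUd hjk) ((hmem j ⟨t, ht⟩).1 htj) ((hmem k ⟨t, ht⟩).1 htk)
    simp [hf₀ k htk]
  · simp [hf₀ j htj]

lemma OrthogonallyFinite.finite_of_eqOn_iff [NormalSpace X] [Semiring B] (hB : OrthogonallyFinite B)
    (ψ : C(X, ℝ) →+* B) {F : Set X} (hF : ∀ u v, ψ u = ψ v ↔ Set.EqOn u v F) : F.Finite := by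
  by_contra hinf
  obtain ⟨f, horth, hone⟩ := exists_seq_continuousMap_orthogonal hinf
  obtain ⟨j, hj⟩ := hB (fun n => ψ (f n)) fun j k hjk => by
    beta_reduce
    rw [← map_mul, ← map_zero ψ, hF]
    exact horth hjk
  obtain ⟨x, hx, hfx⟩ := hone j
  rw [← map_mul, ← map_zero ψ, hF] at hj
  simpa [hfx] using hj hx

lemma exists_continuousMap_eqOn_of_finite [NormalSpace X] {F : Set X} (hF : F.Finite)
    (g : X → ℝ) : ∃ u : C(X, ℝ), Set.EqOn u g F := by
  have := hF.to_subtype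
  obtain ⟨u, hu⟩ := ContinuousMap.exists_restrict_eq hF.isClosed
    ⟨F.domRestrict g, continuous_of_discreteTopology⟩
  exact ⟨u, fun x hx => congrArg (fun v : C(F, ℝ) => v ⟨x, hx⟩) hu⟩

lemma map_mem_span_eigenprojections [NormalSpace X] [Ring B] [StarRing B] [Algebra ℝ B]
    (ψ : C(X, ℝ) →⋆ₐ[ℝ] B) {F : Set X} (hF : F.Finite)
    (hψ : ∀ u v, ψ u = ψ v ↔ Set.EqOn u v F) (u : C(X, ℝ)) :
    ψ u ∈ Submodule.span ℝ (eigenprojections (ψ u)) := by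
  classical
  choose f hf using fun t => exists_continuousMap_eqOn_of_finite hF (Pi.single t 1)
  have hsum : ψ u = ∑ t ∈ hF.toFinset, u t • ψ (f t) := by
    simp_rw [← map_smul, ← map_sum]
    refine (hψ _ _).2 fun s hs => ?_
    simp [ContinuousMap.sum_apply, hf _ hs, Pi.single_apply, hs]
  refine Set.mem_of_eq_of_mem hsum (sum_mem fun t _ => ?_)
  by_cases ht : u t = 0
  · simp [ht]
  refine Submodule.smul_mem _ _ (Submodule.subset_span ⟨⟨?_, ?_⟩, u t, ht, ?_⟩)
  · rw [IsIdempotentElem, ← map_mul]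
    exact (hψ _ _).2 fun s hs => by simp [hf _ hs, Pi.single_apply]
  · rw [IsSelfAdjoint, ← map_star, star_trivial]
  · rw [← map_mul, ← map_smul]
    refine (hψ _ _).2 fun s hs => ?_
    rcases eq_or_ne s t with rfl | hst
    · simp
    · simp [hf _ hs, hst]

end ContinuousFunctions

section FiniteDimensional

section ScalarCorner

variable (𝕜 : Type*) {B : Type*} [Field 𝕜] [Ring B] [Algebra 𝕜 B]

/-- The corner `e B e` consists of scalar multiples of `e`; for a projection `e` this is minimality
in the sense of von Neumann algebras. -/
def HasScalarCorner (e : B) : Prop :=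
  ∀ b, e * b * e ∈ Submodule.span 𝕜 {e}

variable {𝕜} [StarRing B]

lemma HasScalarCorner.exists_forall_mem_span_singleton (hB : ∀ b : B, star b * b = 0 → b = 0)
    {e f : B} (he : IsStarProjection e) (hf : IsStarProjection f) (hecorner : HasScalarCorner 𝕜 e)
    (hfcorner : HasScalarCorner 𝕜 f) : ∃ v, ∀ b, e * b * f ∈ Submodule.span 𝕜 {v} := by
  by_cases hzero : ∀ b, e * b * f = 0
  · exact ⟨0, fun b => by simp [hzero b]⟩
  push Not at hzero
  obtain ⟨b₀, hb₀⟩ := hzero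
  set z := e * b₀ * f with hz
  have hz_star : star z = f * star b₀ * e := by
    simp [hz, he.isSelfAdjoint.star_eq, hf.isSelfAdjoint.star_eq, mul_assoc]
  obtain ⟨c, hc⟩ := Submodule.mem_span_singleton.1 (hecorner (b₀ * f * star b₀))
  have hzz : z * star z = c • e := by
    rw [hc, hz_star, hz]
    simp only [mul_assoc, ← mul_assoc f f, hf.isIdempotentElem.eq]
  have hc₀ : c ≠ 0 := by
    rintro rfl
    exact hb₀ (star_eq_zero.1 (hB (star z) (by rw [star_star, hzz, zero_smul])))
  refine ⟨z, fun b => ?_⟩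
  obtain ⟨d, hd⟩ := Submodule.mem_span_singleton.1 (hfcorner (star b₀ * e * b))
  have key : c • (e * b * f) = d • z := calc
    c • (e * b * f) = z * star z * b * f := by simp only [hzz, smul_mul_assoc]
    _ = z * (f * (star b₀ * e * b) * f) := by simp only [hz_star, mul_assoc]
    _ = d • z := by rw [← hd, mul_smul_comm, hz, mul_assoc _ f f, hf.isIdempotentElem.eq]
  rw [← inv_smul_smul₀ hc₀ (e * b * f), key]
  exact Submodule.smul_mem _ _ (Submodule.smul_mem _ _ (Submodule.mem_span_singleton_self z))

lemma exists_finiteDimensional_forall_mul_mul_mem (hB : ∀ b : B, star b * b = 0 → b = 0) {e f : B}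
    (he : e ∈ AddSubmonoid.closure {p | IsStarProjection p ∧ HasScalarCorner 𝕜 p})
    (hf : f ∈ AddSubmonoid.closure {p | IsStarProjection p ∧ HasScalarCorner 𝕜 p}) :
    ∃ V : Submodule 𝕜 B, FiniteDimensional 𝕜 V ∧ ∀ b, e * b * f ∈ V := by
  induction he, hf using AddSubmonoid.closure_induction₂ with
  | mem e f he hf =>
    obtain ⟨v, hv⟩ := he.2.exists_forall_mem_span_singleton hB he.1 hf.1 hf.2
    exact ⟨_, inferInstance, hv⟩
  | zero_left f _ => exact ⟨⊥, inferInstance, fun b => by simp⟩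
  | zero_right e _ => exact ⟨⊥, inferInstance, fun b => by simp⟩
  | add_left e e' f _ _ _ he he' =>
    obtain ⟨V, hV, hVb⟩ := he
    obtain ⟨W, hW, hWb⟩ := he'
    refine ⟨V ⊔ W, inferInstance, fun b => ?_⟩
    rw [add_mul, add_mul]
    exact Submodule.add_mem_sup (hVb b) (hWb b)
  | add_right e f f' _ _ _ hf hf' =>
    obtain ⟨V, hV, hVb⟩ := hf
    obtain ⟨W, hW, hWb⟩ := hf'
    refine ⟨V ⊔ W, inferInstance, fun b => ?_⟩
    rw [mul_add]
    exact Submodule.add_mem_sup (hVb b) (hWb b)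

end ScalarCorner

section Subprojections

variable {B : Type*} [Ring B] [StarRing B]

/-- `f` is a star projection strictly below the star projection `e`. -/
structure IsProperSubprojection (f e : B) : Prop where
  left : IsStarProjection f
  right : IsStarProjection e
  mul_eq : f * e = f
  ne : f ≠ e

lemma IsProperSubprojection.sub {e f : B} (h : IsProperSubprojection f e) (hf : f ≠ 0) :
    IsProperSubprojection (e - f) e where
  left := h.left.sub_of_mul_eq_left h.right h.mul_eq
  right := h.right
  mul_eq := by rw [sub_mul, h.right.isIdempotentElem.eq, h.mul_eq]
  ne := by simpa using hf

lemma mul_sub_succ_eq_zero_of_isProperSubprojection {p : ℕ → B}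
    (hp : ∀ n, IsProperSubprojection (p (n + 1)) (p n)) {j k : ℕ} (hjk : j < k) :
    (p k - p (k + 1)) * (p j - p (j + 1)) = 0 := by
  have hmul : ∀ {m n}, m ≤ n → p n * p m = p n := fun {m n} hmn => by
    induction n, hmn using Nat.le_induction with
    | base => exact (hp m).right.isIdempotentElem.eq
    | succ n _ ih => rw [← (hp n).mul_eq, mul_assoc, ih]
  rw [sub_mul, mul_sub, mul_sub, hmul hjk.le, hmul hjk, hmul (Nat.le_succ_of_le hjk.le),
    hmul (Nat.succ_le_succ hjk.le), sub_self, sub_self, sub_self]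

theorem OrthogonallyFinite.wellFounded_isProperSubprojection (hB : OrthogonallyFinite B) :
    WellFounded (IsProperSubprojection (B := B)) := by
  rw [wellFounded_iff_isEmpty_descending_chain]
  refine ⟨fun ⟨p, hp⟩ => ?_⟩
  have hsub : ∀ n, IsStarProjection (p n - p (n + 1)) := fun n =>
    (hp n).left.sub_of_mul_eq_left (hp n).right (hp n).mul_eq
  obtain ⟨j, hj⟩ := hB (fun n => p n - p (n + 1)) fun j k hjk => by
    rcases hjk.lt_or_gt with hlt | hgt
    · rw [← (hsub j).isSelfAdjoint.star_eq, ← (hsub k).isSelfAdjoint.star_eq, ← star_mul,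
        mul_sub_succ_eq_zero_of_isProperSubprojection hp hlt, star_zero]
    · exact mul_sub_succ_eq_zero_of_isProperSubprojection hp hgt
  rw [(hsub j).isIdempotentElem.eq, sub_eq_zero] at hj
  exact (hp j).ne hj.symm

variable [Algebra ℂ B] [StarModule ℂ B]

lemma exists_isProperSubprojection_of_not_hasScalarCorner
    (hB : ∀ x : B, IsSelfAdjoint x → x ∈ Submodule.span ℝ (eigenprojections x)) {e : B}
    (he : IsStarProjection e) (hcorner : ¬ HasScalarCorner ℂ e) :
    ∃ f, IsProperSubprojection f e ∧ f ≠ 0 := by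
  contrapose! hcorner
  let φ : B →ₗ[ℂ] B := LinearMap.mulRight ℂ e ∘ₗ LinearMap.mulLeft ℂ e
  suffices hsa : (selfAdjoint B : Set B) ⊆ (Submodule.span ℂ {e}).comap φ by
    intro b
    have hb : b ∈ Submodule.span ℂ (selfAdjoint B : Set B) := by
      rw [span_selfAdjoint]
      trivial
    exact Submodule.span_le.2 hsa hb
  intro a ha
  set x := e * a * e with hx
  have hxsa : IsSelfAdjoint x := by
    simpa only [he.isSelfAdjoint.star_eq] using IsSelfAdjoint.conjugate ha e
  have hex : e * x = x := by simp only [hx, ← mul_assoc, he.isIdempotentElem.eq]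
  suffices hle : Submodule.span ℝ (eigenprojections x) ≤ (Submodule.span ℂ {e}).restrictScalars ℝ
    from hle (hB x hxsa)
  refine Submodule.span_le.2 ?_
  rintro f ⟨hf, t, ht, hxf⟩
  have hef : e * f = f := by
    rw [← inv_smul_smul₀ ht (e * f), ← mul_smul_comm, ← hxf, ← mul_assoc, hex, hxf,
      inv_smul_smul₀ ht]
  have hfe : f * e = f := by
    simpa [he.isSelfAdjoint.star_eq, hf.isSelfAdjoint.star_eq] using congrArg star hef
  by_cases hne : f = e
  · exact hne ▸ Submodule.mem_span_singleton_self e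
  · rw [hcorner f ⟨hf, he, hfe, hne⟩]
    exact zero_mem _

lemma OrthogonallyFinite.isStarProjection_mem_closure (hfin : OrthogonallyFinite B)
    (hB : ∀ x : B, IsSelfAdjoint x → x ∈ Submodule.span ℝ (eigenprojections x)) {e : B}
    (he : IsStarProjection e) :
    e ∈ AddSubmonoid.closure {p : B | IsStarProjection p ∧ HasScalarCorner ℂ p} := by
  induction e using hfin.wellFounded_isProperSubprojection.induction with
  | _ e ih =>
    by_cases hcorner : HasScalarCorner ℂ e
    · exact AddSubmonoid.subset_closure ⟨he, hcorner⟩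
    obtain ⟨f, hfe, hf₀⟩ := exists_isProperSubprojection_of_not_hasScalarCorner hB he hcorner
    have hsub := hfe.sub hf₀
    rw [← add_sub_cancel f e]
    exact add_mem (ih f hfe hfe.left) (ih (e - f) hsub hsub.left)

theorem OrthogonallyFinite.finiteDimensional (hfin : OrthogonallyFinite B)
    (hproper : ∀ b : B, star b * b = 0 → b = 0)
    (hB : ∀ x : B, IsSelfAdjoint x → x ∈ Submodule.span ℝ (eigenprojections x)) :
    FiniteDimensional ℂ B := by
  have hone := hfin.isStarProjection_mem_closure hB (.one B)
  obtain ⟨V, hV, hmem⟩ := exists_finiteDimensional_forall_mul_mul_mem hproper hone hone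
  have htop : V = ⊤ := Submodule.eq_top_iff'.2 fun b => by simpa using hmem b
  subst htop
  exact Submodule.topEquiv.finiteDimensional

end Subprojections

section Quotient

open scoped ComplexStarModule

variable {A B : Type*} [CStarAlgebra A] [Ring B] [StarRing B] [Algebra ℂ B] [StarModule ℂ B]

lemma OrthogonallyFinite.mem_span_eigenprojections (hB : OrthogonallyFinite B) {π : A →⋆ₐ[ℂ] B}
    (hπ : Function.Surjective π) (hker : IsClosed (RingHom.ker π : Set A)) {x : B}
    (hx : IsSelfAdjoint x) : x ∈ Submodule.span ℝ (eigenprojections x) := by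
  obtain ⟨a, ha, rfl⟩ : ∃ a, IsSelfAdjoint a ∧ π a = x := by
    obtain ⟨a, rfl⟩ := hπ x
    exact ⟨ℜ a, (ℜ a).2, (map_realPart π a).trans hx.coe_realPart⟩
  let ψ : C(spectrum ℝ a, ℝ) →⋆ₐ[ℝ] B := (π.restrictScalars ℝ).comp (cfcHom ha)
  obtain ⟨F, hF⟩ := exists_eqOn_iff_of_isClosed_ker (ψ : C(spectrum ℝ a, ℝ) →+* B)
    (hker.preimage (cfcHom_continuous ha))
  have hψ := map_mem_span_eigenprojections ψ (hB.finite_of_eqOn_iff _ hF) hF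
    (.restrict (spectrum ℝ a) (.id ℝ))
  rwa [show ψ (.restrict (spectrum ℝ a) (.id ℝ)) = π a from congrArg π (cfcHom_id ha)] at hψ

theorem OrthogonallyFinite.finiteDimensional_of_surjective (hB : OrthogonallyFinite B)
    {π : A →⋆ₐ[ℂ] B} (hπ : Function.Surjective π) (hker : IsClosed (RingHom.ker π : Set A)) :
    FiniteDimensional ℂ B := by
  refine hB.finiteDimensional (fun b hb => ?_) fun x hx => hB.mem_span_eigenprojections hπ hker hx
  obtain ⟨a, rfl⟩ := hπ b
  rw [← map_star, ← map_mul] at hb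
  exact mem_of_star_mul_self_mem hker hb

end Quotient

end FiniteDimensional

section QuotientStar

/-- The star ring structure on the quotient by a star-closed two-sided ideal. -/
@[reducible]
def quotientStarRing {R : Type*} [Ring R] [StarRing R] (J : Ideal R) [J.IsTwoSided]
    (hJ : ∀ a ∈ J, star a ∈ J) : StarRing (R ⧸ J) where
  star := Quotient.map' star fun a b hab => by
    rw [Submodule.quotientRel_def] at hab ⊢
    simpa only [star_sub] using hJ _ hab
  star_involutive := by
    rintro ⟨a⟩
    exact congrArg (Ideal.Quotient.mk J) (star_star a)
  star_mul := by
    rintro ⟨a⟩ ⟨b⟩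
    exact congrArg (Ideal.Quotient.mk J) (star_mul a b)
  star_add := by
    rintro ⟨a⟩ ⟨b⟩
    exact congrArg (Ideal.Quotient.mk J) (star_add a b)

lemma orthogonallyFinite_quotient {R : Type*} [Ring R] {J : Ideal R} [J.IsTwoSided]
    (hJ : ∀ a : ℕ → R, (Pairwise fun j k => a j * a k ∈ J) → ∃ j, a j * a j ∈ J) :
    OrthogonallyFinite (R ⧸ J) := fun b hb => by
  choose a ha using fun n => Ideal.Quotient.mk_surjective (b n)
  simp only [← ha, ← map_mul, Ideal.Quotient.eq_zero_iff_mem] at hb ⊢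
  exact hJ a hb

variable {A : Type*} [CStarAlgebra A]

theorem finiteDimensional_quotient_of_orthogonallyFinite {J : Ideal A} [J.IsTwoSided]
    (hJ : IsClosed (J : Set A)) (hfin : OrthogonallyFinite (A ⧸ J)) :
    FiniteDimensional ℂ (A ⧸ J.restrictScalars ℂ) := by
  let _ := quotientStarRing J fun a ha => star_mem_of_isClosed hJ ha
  have : StarModule ℂ (A ⧸ J) := ⟨fun c => by
    rintro ⟨a⟩
    exact congrArg (Ideal.Quotient.mk J) (star_smul c a)⟩
  let π : A →⋆ₐ[ℂ] A ⧸ J := { Ideal.Quotient.mkₐ ℂ J with map_star' := fun _ => rfl }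
  have hker : RingHom.ker π = J := Ideal.mk_ker
  exact hfin.finiteDimensional_of_surjective (π := π) Ideal.Quotient.mk_surjective (by rwa [hker])

end QuotientStar

section Derivation

/-- `q` is a quasi-seminorm on the `A`-bimodule `X` for which `q (a • x)` and `q (x • a)` are at
most `‖a‖ * q x`. -/
structure IsBimoduleQuasiSeminorm (𝕜 A : Type*) {X : Type*} [NormedField 𝕜] [NormedRing A]
    [AddCommGroup X] [Module 𝕜 X] [SMul A X] [SMul Aᵐᵒᵖ X] (q : X → ℝ) (C : ℝ) : Prop
    extends IsQuasiSeminorm 𝕜 q C where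
  left : ∀ (a : A) (x : X), q (a • x) ≤ ‖a‖ * q x
  right : ∀ (b : A) (x : X), q (op b • x) ≤ ‖b‖ * q x

lemma IsQuasiSeminorm.isBimoduleQuasiSeminorm {𝕜 A X : Type*} [NormedField 𝕜] [NormedRing A]
    [NormOneClass A] [AddCommGroup X] [Module 𝕜 X] [Module A X] [Module Aᵐᵒᵖ X] {q : X → ℝ} {C : ℝ}
    (hq : IsQuasiSeminorm 𝕜 q C)
    (hq_mod : ∀ (a b : A) (x : X), q (a • op b • x) ≤ ‖a‖ * ‖b‖ * q x) :
    IsBimoduleQuasiSeminorm 𝕜 A q C where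
  toIsQuasiSeminorm := hq
  left a x := by simpa using hq_mod a 1 x
  right b x := by simpa using hq_mod 1 b x

/-- A derivation into a bimodule whose right action is encoded as an action of `Aᵐᵒᵖ`; Mathlib's
`Derivation` covers commutative algebras only. -/
def IsBimoduleDerivation {𝕜 A X : Type*} [Semiring 𝕜] [Semiring A] [Module 𝕜 A]
    [AddCommMonoid X] [Module 𝕜 X] [SMul A X] [SMul Aᵐᵒᵖ X] (δ : A →ₗ[𝕜] X) : Prop :=
  ∀ a b, δ (a * b) = op b • δ a + a • δ b

section Banach

open Filter Topology

lemma tsum_mul_sub_mem {R ι : Type*} [Ring R] [TopologicalSpace R] [IsTopologicalRing R]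
    {J : Ideal R} (hJ : IsClosed (J : Set R)) {y : ι → R} (hy : Summable y) {a : R} {j : ι}
    (h : ∀ k, k ≠ j → y k * a ∈ J) : (∑' k, y k) * a - y j * a ∈ J := by
  classical
  have hsum := (hy.hasSum.sub (hasSum_ite_eq j (y j))).mul_right a
  rw [← sub_mul]
  refine hJ.mem_of_tendsto hsum (.of_forall fun s => J.sum_mem fun k _ => ?_)
  by_cases hk : k = j
  · simp [hk]
  · simpa [hk] using h k hk

variable {𝕜 A X : Type*} [NontriviallyNormedField 𝕜] [NormedRing A] [NormedAlgebra 𝕜 A]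
  [AddCommGroup X] [Module 𝕜 X] {q : X → ℝ} {C : ℝ}

/-- The continuity ideal of `δ`: all `a` for which `x ↦ δ (x * a)` is bounded. For a derivation
`δ` this says equally that `x ↦ δ x * a` is bounded. -/
def continuityIdeal (hq : IsQuasiSeminorm 𝕜 q C) (δ : A →ₗ[𝕜] X) : Ideal A where
  carrier := {a | IsQuasiBounded q (δ ∘ₗ LinearMap.mulRight 𝕜 a)}
  add_mem' {a b} ha hb := by
    have hadd : LinearMap.mulRight 𝕜 (a + b) = LinearMap.mulRight 𝕜 a + LinearMap.mulRight 𝕜 b :=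
      map_add (LinearMap.mul 𝕜 A).flip a b
    rw [Set.mem_ofPred_eq, hadd, LinearMap.comp_add]
    exact hq.isQuasiBounded_add ha hb
  zero_mem' := by
    rw [Set.mem_ofPred_eq, LinearMap.mulRight_zero_eq_zero, LinearMap.comp_zero]
    exact hq.isQuasiBounded_zero
  smul_mem' c a ha := by
    have := ha.comp ((ContinuousLinearMap.mul 𝕜 A).flip c)
    rw [Set.mem_ofPred_eq, smul_eq_mul, LinearMap.mulRight_mul]
    exact this

variable [Module A X] [Module Aᵐᵒᵖ X] {δ : A →ₗ[𝕜] X}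

namespace IsBimoduleQuasiSeminorm

lemma le_of_mul_sub_mem (hq : IsBimoduleQuasiSeminorm 𝕜 A q C) (hδ : IsBimoduleDerivation δ)
    {J : Ideal A} {K : ℝ} (hK : ∀ r ∈ J, q (δ r) ≤ K * ‖r‖) {a b y : A} (h : b * a - y ∈ J) :
    q (δ y) ≤ C * (C * (‖a‖ * q (δ b) + ‖b‖ * q (δ a)) + K * ‖b * a - y‖) := by
  have hC := hq.pos
  calc q (δ y) = q (δ (b * a) - δ (b * a - y)) := by rw [← map_sub, sub_sub_cancel]
    _ ≤ C * (q (δ (b * a)) + q (δ (b * a - y))) := hq.sub _ _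
    _ ≤ _ := by
      gcongr
      · rw [hδ]
        refine (hq.add _ _).trans ?_
        gcongr
        exacts [hq.right _ _, hq.left _ _]
      · exact hK _ h

variable [SMulCommClass 𝕜 Aᵐᵒᵖ X]

lemma mem_continuityIdeal_iff (hq : IsBimoduleQuasiSeminorm 𝕜 A q C)
    (hδ : IsBimoduleDerivation δ) {a : A} :
    a ∈ continuityIdeal hq.toIsQuasiSeminorm δ ↔ IsQuasiBounded q (op a • δ) := by
  have hdiff : ∀ x, (δ ∘ₗ LinearMap.mulRight 𝕜 a) x - (op a • δ) x = x • δ a := fun x => by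
    simp [hδ x a]
  have hle : ∀ x : A, q (x • δ a) ≤ q (δ a) * ‖x‖ := fun x => by
    simpa only [mul_comm] using hq.left x (δ a)
  constructor <;> intro h <;> refine hq.isQuasiBounded_of_sub_le h (hq.nonneg (δ a)) fun x => ?_
  · rw [← hq.map_neg, neg_sub, hdiff]
    exact hle x
  · rw [hdiff]
    exact hle x

lemma isTwoSided_continuityIdeal (hq : IsBimoduleQuasiSeminorm 𝕜 A q C)
    (hδ : IsBimoduleDerivation δ) : (continuityIdeal hq.toIsQuasiSeminorm δ).IsTwoSided where
  mul_mem_of_left {a} b ha := by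
    rw [hq.mem_continuityIdeal_iff hδ] at ha ⊢
    obtain ⟨K, hK, ha⟩ := ha
    refine ⟨‖b‖ * K, by positivity, fun x => ?_⟩
    rw [op_mul, mul_smul, LinearMap.smul_apply, mul_assoc]
    exact (hq.right _ _).trans (by gcongr; exact ha x)

variable [CompleteSpace A]

lemma isClosed_continuityIdeal (hq : IsBimoduleQuasiSeminorm 𝕜 A q C)
    (hδ : IsBimoduleDerivation δ) :
    IsClosed (continuityIdeal hq.toIsQuasiSeminorm δ : Set A) := by
  refine IsSeqClosed.isClosed fun a a₀ ha hlim => (hq.mem_continuityIdeal_iff hδ).2 ?_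
  refine hq.isQuasiBounded_of_tendsto
    (fun n => (hq.mem_continuityIdeal_iff hδ).1 (ha n)) fun x => ?_
  have hlim₀ : Tendsto (fun n => ‖a₀ - a n‖ * q (δ x)) atTop (𝓝 0) := by
    simpa using (hlim.const_sub a₀).norm.mul_const (q (δ x))
  refine squeeze_zero (fun n => hq.nonneg _) (fun n => ?_) hlim₀
  simpa only [LinearMap.smul_apply, op_sub, sub_smul] using hq.right (a₀ - a n) (δ x)

/-- A gliding hump: if no square `a j * a j` lies in the continuity ideal, some `b = ∑ x k * a k`
has `q (δ b) ≥ j` for all `j`, because modulo the ideal `b * a j` is the hump `x j * a j * a j`. -/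
theorem exists_mul_self_mem_continuityIdeal (hq : IsBimoduleQuasiSeminorm 𝕜 A q C)
    (hδ : IsBimoduleDerivation δ)
    (hbdd : IsQuasiBounded q
      (δ ∘ₗ ((continuityIdeal hq.toIsQuasiSeminorm δ).restrictScalars 𝕜).subtype))
    {a : ℕ → A}
    (horth : Pairwise fun j k => a j * a k ∈ continuityIdeal hq.toIsQuasiSeminorm δ) :
    ∃ j, a j * a j ∈ continuityIdeal hq.toIsQuasiSeminorm δ := by
  by_contra! hsq
  obtain ⟨K, hK₀, hK⟩ := hbdd
  have hC := hq.pos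
  choose x hx hqx using fun j : ℕ => hq.exists_lt_of_not_isQuasiBounded (hsq j)
    (r := (1 / 2) ^ j / (1 + ‖a j‖)) (by positivity)
    (C * (C * (‖a j‖ * j + 2 * q (δ (a j))) + K * (3 * ‖a j‖)))
  have hxa : ∀ j, ‖x j * a j‖ ≤ (1 / 2) ^ j := fun j => by
    calc ‖x j * a j‖ ≤ ‖x j‖ * (1 + ‖a j‖) :=
          (norm_mul_le _ _).trans (by gcongr; exact le_add_of_nonneg_left zero_le_one)
      _ ≤ (1 / 2) ^ j := (le_div_iff₀ (by positivity)).1 (hx j).le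
  have hsum : Summable fun j => x j * a j := .of_norm_bounded summable_geometric_two hxa
  set b := ∑' j, x j * a j
  have hb : ‖b‖ ≤ 2 := tsum_of_norm_bounded hasSum_geometric_two hxa
  obtain ⟨j, hj⟩ := exists_nat_ge (q (δ b))
  have hmem : b * a j - x j * a j * a j ∈ continuityIdeal hq.toIsQuasiSeminorm δ :=
    tsum_mul_sub_mem (hq.isClosed_continuityIdeal hδ) hsum fun k hk => by
      rw [mul_assoc]
      exact Ideal.mul_mem_left _ _ (horth hk)
  have hnorm : ‖b * a j - x j * a j * a j‖ ≤ 3 * ‖a j‖ := by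
    rw [← sub_mul]
    refine (norm_mul_le _ _).trans ?_
    gcongr
    have hle : ‖x j * a j‖ ≤ 1 := (hxa j).trans (pow_le_one₀ (by norm_num) (by norm_num))
    linarith [norm_sub_le b (x j * a j)]
  refine (hqx j).not_ge ?_
  rw [LinearMap.comp_apply, LinearMap.mulRight_apply, ← mul_assoc]
  refine (hq.le_of_mul_sub_mem hδ (fun r hr => hK ⟨r, hr⟩) hmem).trans ?_
  have := hq.nonneg (δ (a j))
  gcongr

end IsBimoduleQuasiSeminorm

end Banach

section CStarAlgebra

variable {A X : Type*} [CStarAlgebra A] [AddCommGroup X] [Module ℂ X] {q : X → ℝ} {C : ℝ}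
  {δ : A →ₗ[ℂ] X}

lemma IsQuasiSeminorm.isQuasiBounded_comp_subtype_continuityIdeal (hq : IsQuasiSeminorm ℂ q C)
    (hcl : IsClosed (continuityIdeal hq δ : Set A)) :
    IsQuasiBounded q (δ ∘ₗ ((continuityIdeal hq δ).restrictScalars ℂ).subtype) := by
  by_contra hunbdd
  choose a ha hqa using fun n : ℕ =>
    hq.exists_lt_of_not_isQuasiBounded hunbdd (r := (1 / 2) ^ n) (by positivity) n
  have hsum : Summable fun n => ‖(a n : A)‖ ^ 2 := by
    refine .of_nonneg_of_le (fun n => by positivity) (fun n => ?_) summable_geometric_two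
    exact (pow_le_of_le_one (norm_nonneg _) ((ha n).le.trans
      (pow_le_one₀ (by norm_num) (by norm_num))) two_ne_zero).trans (ha n).le
  obtain ⟨d, ⟨K, hK, hd⟩, hfactor⟩ := exists_common_right_factor hcl (fun n => (a n).2) hsum
  obtain ⟨n, hn⟩ := exists_nat_ge (K * ‖d‖)
  obtain ⟨c, hc, hcd⟩ := hfactor n
  refine (hqa n).not_ge ?_
  calc q (δ (a n)) = q (δ (c * d)) := by rw [hc]
    _ ≤ K * ‖c‖ := hd c
    _ ≤ K * ‖d‖ := by gcongr
    _ ≤ n := hn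

theorem derivation_into_quasiNormed_bimodule_bounded_general [Module A X]
    [Module Aᵐᵒᵖ X] [SMulCommClass ℂ Aᵐᵒᵖ X]
    (hq : IsBimoduleQuasiSeminorm ℂ A q C) (hδ : IsBimoduleDerivation δ) : IsQuasiBounded q δ := by
  have := hq.isTwoSided_continuityIdeal hδ
  have hcl := hq.isClosed_continuityIdeal hδ
  have hbdd := hq.isQuasiBounded_comp_subtype_continuityIdeal hcl
  have hfin := orthogonallyFinite_quotient fun a => hq.exists_mul_self_mem_continuityIdeal hδ hbdd
  have := finiteDimensional_quotient_of_orthogonallyFinite hcl hfin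
  exact hq.isQuasiBounded_of_finiteDimensional_quotient hcl hbdd

end CStarAlgebra

end Derivation

/-- Every derivation from a unital C*-algebra `A` into a quasi-normed `A`-bimodule
`X` (with modulus of concavity `C ≥ 1`, no completeness assumed) is bounded. -/
theorem derivation_into_quasiNormed_bimodule_bounded
    (A X : Type*) [NormedRing A] [StarRing A] [CStarRing A]
    [NormedAlgebra ℂ A] [CompleteSpace A] [StarModule ℂ A]
    [AddCommGroup X] [Module ℂ X]
    [Module A X] [Module Aᵐᵒᵖ X] [SMulCommClass A Aᵐᵒᵖ X]
    [IsScalarTower ℂ A X] [IsScalarTower ℂ Aᵐᵒᵖ X]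
    (q : X → ℝ) (C : ℝ) (hC : 1 ≤ C)
    (hq_nonneg : ∀ x : X, 0 ≤ q x)
    (hq_def : ∀ x : X, q x = 0 ↔ x = 0)
    (hq_smul : ∀ (α : ℂ) (x : X), q (α • x) = ‖α‖ * q x)
    (hq_add : ∀ x y : X, q (x + y) ≤ C * (q x + q y))
    (hq_mod : ∀ (a b : A) (x : X), q (a • (op b • x)) ≤ ‖a‖ * ‖b‖ * q x)
    (δ : A →ₗ[ℂ] X)
    (hδ : ∀ a b : A, δ (a * b) = op b • δ a + a • δ b) :
    ∃ K : ℝ, 0 ≤ K ∧ ∀ a : A, q (δ a) ≤ K * ‖a‖ := by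
  let _ : CStarAlgebra A := {}
  have : SMulCommClass ℂ Aᵐᵒᵖ X := IsScalarTower.to_smulCommClass
  have hq : IsQuasiSeminorm ℂ q C := ⟨hC, hq_nonneg, hq_smul, hq_add⟩
  cases subsingleton_or_nontrivial A
  · exact ⟨0, le_rfl, fun a => by simp [Subsingleton.elim a 0, hq.map_zero]⟩
  · exact derivation_into_quasiNormed_bimodule_bounded_general
      (hq.isBimoduleQuasiSeminorm hq_mod) hδ
end

section
/- Let M be a von Neumann algebra acting on a complex Hilbert space H and E a quasi-normed M-sub-bimodule of M with modulus of concavity C ≥ 1. If x, y ∈ M satisfy |x| ≤ |y| and y ∈ E, then x ∈ E and ‖x‖_E ≤ ‖y‖_E. -/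
set_option synthInstance.maxHeartbeats 1000000

/-!
If `|x| ≤ |y|`, then `x = a * y * b` for contractions `a, b ∈ M`, and the claim follows from the
bimodule inequality. The contractions come from Douglas factorization: an operator inequality
`A⋆A ≤ B⋆B` says that `‖A z‖ ≤ ‖B z‖` for all `z`, so `B z ↦ A z`, extended by zero to the
orthogonal complement of the range of `B`, is a contraction `c` with `c B = A`; being canonical,
`c` commutes with everything that commutes with `A`, `B` and `B⋆`. Factoring `|x|^½ = c |y|^½`,
`x = u |x|` and `|y| = v y` inside `M` gives `x = u (c |y| c⋆) = (u c v) y c⋆`.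
-/

section DouglasFactor

variable {𝕜 V F G : Type*} [RCLike 𝕜] [AddCommGroup V] [Module 𝕜 V]
  [NormedAddCommGroup F] [NormedSpace 𝕜 F] [NormedAddCommGroup G] [InnerProductSpace 𝕜 G]

theorem denseRange_coprod_orthogonal_range [CompleteSpace G] (B : V →ₗ[𝕜] G) :
    DenseRange (B.coprod B.rangeᗮ.subtype) := by
  have htop : (B.range ⊔ B.rangeᗮ).topologicalClosure = ⊤ := by
    rw [Submodule.topologicalClosure_eq_top_iff, ← Submodule.inf_orthogonal,
      Submodule.inf_orthogonal_eq_bot]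
  have hrange : (B.coprod B.rangeᗮ.subtype).range = B.range ⊔ B.rangeᗮ := by
    rw [LinearMap.range_coprod, Submodule.range_subtype]
  rw [DenseRange, ← LinearMap.coe_range, hrange]
  exact Submodule.dense_iff_topologicalClosure_eq_top.2 htop

theorem norm_le_norm_add_of_mem_orthogonal {K : Submodule 𝕜 G} {v w : G} (hv : v ∈ K)
    (hw : w ∈ Kᗮ) : ‖v‖ ≤ ‖v + w‖ := by
  have hsq := norm_add_sq_eq_norm_sq_add_norm_sq_of_inner_eq_zero v w
    (Submodule.inner_right_of_mem_orthogonal hv hw)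
  exact le_of_sq_le_sq (by linarith [mul_self_nonneg ‖w‖]) (norm_nonneg _)

variable {A : V →ₗ[𝕜] F} {B : V →ₗ[𝕜] G} {r : ℝ}

theorem norm_comp_fst_le_norm_coprod_orthogonal (hr : 0 ≤ r) (h : ∀ v, ‖A v‖ ≤ r * ‖B v‖)
    (p : V × B.rangeᗮ) :
    ‖(A ∘ₗ LinearMap.fst 𝕜 V B.rangeᗮ) p‖ ≤ r * ‖B.coprod B.rangeᗮ.subtype p‖ :=
  (h p.1).trans <| mul_le_mul_of_nonneg_left
    (norm_le_norm_add_of_mem_orthogonal (LinearMap.mem_range_self B p.1) p.2.2) hr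

variable [CompleteSpace F]

variable (A B) in
/-- The Douglas factor of `A` through `B`: the bounded operator that sends `B v` to `A v` and
vanishes on the orthogonal complement of the range of `B`. It is defined as the continuous extension
of `B v + w ↦ A v`, and has a junk value unless `‖A v‖ ≤ r * ‖B v‖` for some `r`. -/
noncomputable def douglasFactor : G →L[𝕜] F :=
  (A ∘ₗ LinearMap.fst 𝕜 V B.rangeᗮ).extendOfNorm (B.coprod B.rangeᗮ.subtype)

namespace douglasFactor

variable [CompleteSpace G]

theorem norm_le (hr : 0 ≤ r) (h : ∀ v, ‖A v‖ ≤ r * ‖B v‖) : ‖douglasFactor A B‖ ≤ r :=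
  LinearMap.opNorm_extendOfNorm_le (denseRange_coprod_orthogonal_range B) hr
    (norm_comp_fst_le_norm_coprod_orthogonal hr h)

theorem apply_add (hr : 0 ≤ r) (h : ∀ v, ‖A v‖ ≤ r * ‖B v‖) (v : V) {w : G} (hw : w ∈ B.rangeᗮ) :
    douglasFactor A B (B v + w) = A v :=
  LinearMap.extendOfNorm_eq (denseRange_coprod_orthogonal_range B)
    ⟨r, norm_comp_fst_le_norm_coprod_orthogonal hr h⟩ (v, ⟨w, hw⟩)

theorem apply (hr : 0 ≤ r) (h : ∀ v, ‖A v‖ ≤ r * ‖B v‖) (v : V) :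
    douglasFactor A B (B v) = A v := by
  simpa only [add_zero] using apply_add hr h v B.rangeᗮ.zero_mem

theorem comp_eq_comp (hr : 0 ≤ r) (h : ∀ v, ‖A v‖ ≤ r * ‖B v‖) {T : V → V}
    {R : G →L[𝕜] G} {S : F →L[𝕜] F} (hA : ∀ v, A (T v) = S (A v)) (hB : ∀ v, B (T v) = R (B v))
    (hR : ∀ w ∈ B.rangeᗮ, R w ∈ B.rangeᗮ) :
    douglasFactor A B ∘L R = S ∘L douglasFactor A B := by
  refine DFunLike.coe_injective <| (denseRange_coprod_orthogonal_range B).equalizer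
    (ContinuousLinearMap.continuous _) (ContinuousLinearMap.continuous _) (funext ?_)
  rintro ⟨v, w, hw⟩
  calc douglasFactor A B (R (B v + w))
      = douglasFactor A B (B (T v) + R w) := by rw [map_add, hB]
    _ = S (A v) := by rw [apply_add hr h _ (hR w hw), hA]
    _ = S (douglasFactor A B (B v + w)) := by rw [apply_add hr h v hw]

end douglasFactor

end DouglasFactor

section Loewner

open ContinuousLinearMap InnerProduct

variable {𝕜 E F G : Type*} [RCLike 𝕜]
  [NormedAddCommGroup E] [InnerProductSpace 𝕜 E] [CompleteSpace E]
  [NormedAddCommGroup F] [InnerProductSpace 𝕜 F] [CompleteSpace F]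
  [NormedAddCommGroup G] [InnerProductSpace 𝕜 G] [CompleteSpace G]

theorem adjoint_comp_self_le_iff_norm_apply_le {A : E →L[𝕜] F} {B : E →L[𝕜] G} :
    A† ∘L A ≤ B† ∘L B ↔ ∀ z, ‖A z‖ ≤ ‖B z‖ := by
  have hsa : IsSelfAdjoint (B† ∘L B - A† ∘L A) :=
    (isPositive_adjoint_comp_self B).isSelfAdjoint.sub
      (isPositive_adjoint_comp_self A).isSelfAdjoint
  have hre (z : E) : (B† ∘L B - A† ∘L A).reApplyInnerSelf z = ‖B z‖ ^ 2 - ‖A z‖ ^ 2 := by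
    simp only [reApplyInnerSelf_apply, sub_apply, comp_apply, inner_sub_left, adjoint_inner_left,
      map_sub, inner_self_eq_norm_sq]
  simp only [le_def, isPositive_def', hsa, true_and, hre, sub_nonneg,
    sq_le_sq₀ (norm_nonneg _) (norm_nonneg _)]

end Loewner

section VonNeumannAlgebra

variable {H : Type*} [NormedAddCommGroup H] [InnerProductSpace ℂ H] [CompleteSpace H]
  {M : VonNeumannAlgebra H}

theorem mem_iff_forall_mem_commutant_commute {a : H →L[ℂ] H} :
    a ∈ M ↔ ∀ t ∈ M.commutant, Commute t a := by
  nth_rw 1 [← M.commutant_commutant]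
  exact VonNeumannAlgebra.mem_commutant_iff

theorem cfcSqrt_mem {a : H →L[ℂ] H} (ha : a ∈ M) : CFC.sqrt a ∈ M :=
  mem_iff_forall_mem_commutant_commute.2 fun t ht =>
    ((mem_iff_forall_mem_commutant_commute.1 ha t ht).symm.cfcₙ_nnreal NNReal.sqrt).symm

theorem cfcAbs_mem {a : H →L[ℂ] H} (ha : a ∈ M) : CFC.abs a ∈ M :=
  cfcSqrt_mem (mul_mem (star_mem ha) ha)

theorem douglasFactor_mem {A B : H →L[ℂ] H} (hA : A ∈ M) (hB : B ∈ M)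
    (h : ∀ z, ‖A z‖ ≤ ‖B z‖) : douglasFactor (A : H →ₗ[ℂ] H) (B : H →ₗ[ℂ] H) ∈ M := by
  refine mem_iff_forall_mem_commutant_commute.2 fun t ht => ?_
  have commute_of_mem {a : H →L[ℂ] H} (ha : a ∈ M) : a * t = t * a :=
    VonNeumannAlgebra.mem_commutant_iff.1 ht a ha
  have hker : ∀ w ∈ B.rangeᗮ, t w ∈ B.rangeᗮ := by
    rw [B.orthogonal_range]
    intro w (hw : star B w = 0)
    calc star B (t w) = t (star B w) := DFunLike.congr_fun (commute_of_mem (star_mem hB)) w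
      _ = 0 := by rw [hw, map_zero]
  exact (douglasFactor.comp_eq_comp zero_le_one (fun z => (h z).trans_eq (one_mul _).symm)
    (DFunLike.congr_fun (commute_of_mem hA)) (DFunLike.congr_fun (commute_of_mem hB)) hker).symm

theorem exists_mem_norm_le_one_mul_eq {A B : H →L[ℂ] H} (hA : A ∈ M) (hB : B ∈ M)
    (h : star A * A ≤ star B * B) : ∃ c ∈ M, ‖c‖ ≤ 1 ∧ c * B = A := by
  have hnorm : ∀ z, ‖A z‖ ≤ ‖B z‖ := adjoint_comp_self_le_iff_norm_apply_le.1 h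
  have hnorm_one : ∀ z, ‖A z‖ ≤ 1 * ‖B z‖ := fun z => (hnorm z).trans_eq (one_mul _).symm
  exact ⟨_, douglasFactor_mem hA hB hnorm, douglasFactor.norm_le zero_le_one hnorm_one,
    ContinuousLinearMap.ext (douglasFactor.apply zero_le_one hnorm_one)⟩

theorem exists_mem_norm_le_one_mul_mul_star_eq {X Y : H →L[ℂ] H} (hXM : X ∈ M) (hYM : Y ∈ M)
    (hX : 0 ≤ X) (hXY : X ≤ Y) : ∃ c ∈ M, ‖c‖ ≤ 1 ∧ c * Y * star c = X := by
  have star_sqrt (Z : H →L[ℂ] H) : star (CFC.sqrt Z) = CFC.sqrt Z :=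
    (CFC.sqrt_nonneg Z).isSelfAdjoint.star_eq
  have sqrtX : CFC.sqrt X * star (CFC.sqrt X) = X := by
    rw [star_sqrt, CFC.sqrt_mul_sqrt_self X hX]
  have sqrtY : CFC.sqrt Y * star (CFC.sqrt Y) = Y := by
    rw [star_sqrt, CFC.sqrt_mul_sqrt_self Y (hX.trans hXY)]
  obtain ⟨c, hcM, hc, hcXY⟩ :=
    exists_mem_norm_le_one_mul_eq (cfcSqrt_mem hXM) (cfcSqrt_mem hYM) <| by
      simpa only [star_sqrt] using sqrtX.trans_le (hXY.trans_eq sqrtY.symm)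
  refine ⟨c, hcM, hc, ?_⟩
  calc c * Y * star c = (c * CFC.sqrt Y) * star (c * CFC.sqrt Y) := by
        rw [star_mul, mul_assoc c (CFC.sqrt Y), ← mul_assoc (CFC.sqrt Y), sqrtY, mul_assoc]
    _ = X := by rw [hcXY, sqrtX]

theorem exists_mem_norm_le_one_mul_mul_eq_of_abs_le {x y : H →L[ℂ] H} (hx : x ∈ M) (hy : y ∈ M)
    (hxy : CFC.abs x ≤ CFC.abs y) :
    ∃ a ∈ M, ∃ b ∈ M, ‖a‖ ≤ 1 ∧ ‖b‖ ≤ 1 ∧ a * y * b = x := by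
  have star_abs_mul_abs (w : H →L[ℂ] H) : star (CFC.abs w) * CFC.abs w = star w * w := by
    rw [(CFC.abs_nonneg w).isSelfAdjoint.star_eq, CFC.abs_mul_abs]
  obtain ⟨u, huM, hu, hux⟩ :=
    exists_mem_norm_le_one_mul_eq hx (cfcAbs_mem hx) (star_abs_mul_abs x).ge
  obtain ⟨v, hvM, hv, hvy⟩ :=
    exists_mem_norm_le_one_mul_eq (cfcAbs_mem hy) hy (star_abs_mul_abs y).le
  obtain ⟨c, hcM, hc, hcxy⟩ :=
    exists_mem_norm_le_one_mul_mul_star_eq (cfcAbs_mem hx) (cfcAbs_mem hy) (CFC.abs_nonneg x) hxy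
  refine ⟨u * c * v, mul_mem (mul_mem huM hcM) hvM, star c, star_mem hcM, ?_,
    by rwa [norm_star], ?_⟩
  · calc ‖u * c * v‖ ≤ ‖u‖ * ‖c‖ * ‖v‖ := norm_mul₃_le
      _ ≤ 1 := mul_le_one₀ (mul_le_one₀ hu (norm_nonneg c) hc) (norm_nonneg v) hv
  · calc u * c * v * y * star c = u * (c * (v * y) * star c) := by simp only [mul_assoc]
      _ = x := by rw [hvy, hcxy, hux]

theorem quasiNormed_bimodule_solid_general {E : Set (H →L[ℂ] H)} {nE : (H →L[ℂ] H) → ℝ}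
    (hE_sub : E ⊆ (M : Set (H →L[ℂ] H)))
    (hE_bimod : ∀ a ∈ M, ∀ b ∈ M, ∀ x ∈ E, a * x * b ∈ E)
    (hn_nonneg : ∀ x ∈ E, 0 ≤ nE x)
    (hn_bimod : ∀ a ∈ M, ∀ b ∈ M, ∀ x ∈ E, nE (a * x * b) ≤ ‖a‖ * ‖b‖ * nE x)
    {x y : H →L[ℂ] H} (hx : x ∈ M) (hy : y ∈ E) (hxy : CFC.abs x ≤ CFC.abs y) :
    x ∈ E ∧ nE x ≤ nE y := by
  obtain ⟨a, haM, b, hbM, ha, hb, rfl⟩ :=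
    exists_mem_norm_le_one_mul_mul_eq_of_abs_le hx (hE_sub hy) hxy
  refine ⟨hE_bimod a haM b hbM y hy, ?_⟩
  calc nE (a * y * b) ≤ ‖a‖ * ‖b‖ * nE y := hn_bimod a haM b hbM y hy
    _ ≤ nE y := mul_le_of_le_one_left (hn_nonneg y hy) (mul_le_one₀ ha (norm_nonneg b) hb)

end VonNeumannAlgebra

theorem quasiNormed_bimodule_solid
    (H : Type*) [NormedAddCommGroup H] [InnerProductSpace ℂ H] [CompleteSpace H]
    (M : VonNeumannAlgebra H)
    (E : Set (H →L[ℂ] H)) (nE : (H →L[ℂ] H) → ℝ) (C : ℝ) (hC : 1 ≤ C)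
    (hE_sub : E ⊆ (M : Set (H →L[ℂ] H)))
    (hE_zero : (0 : H →L[ℂ] H) ∈ E)
    (hE_add : ∀ x ∈ E, ∀ y ∈ E, x + y ∈ E)
    (hE_smul : ∀ (α : ℂ), ∀ x ∈ E, α • x ∈ E)
    (hE_bimod : ∀ a ∈ M, ∀ b ∈ M, ∀ x ∈ E, a * x * b ∈ E)
    (hn_nonneg : ∀ x ∈ E, 0 ≤ nE x)
    (hn_def : ∀ x ∈ E, (nE x = 0 ↔ x = 0))
    (hn_smul : ∀ (α : ℂ), ∀ x ∈ E, nE (α • x) = ‖α‖ * nE x)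
    (hn_add : ∀ x ∈ E, ∀ y ∈ E, nE (x + y) ≤ C * (nE x + nE y))
    (hn_bimod : ∀ a ∈ M, ∀ b ∈ M, ∀ x ∈ E, nE (a * x * b) ≤ ‖a‖ * ‖b‖ * nE x)
    (x y : H →L[ℂ] H) (hx : x ∈ M) (hy : y ∈ E)
    (hxy : CFC.sqrt (star x * x) ≤ CFC.sqrt (star y * y)) :
    x ∈ E ∧ nE x ≤ nE y := by
  exact quasiNormed_bimodule_solid_general hE_sub hE_bimod hn_nonneg hn_bimod hx hy hxy
end

section
/- Let M be a von Neumann algebra acting on a complex Hilbert space H and E a quasi-normed M-sub-bimodule of M with modulus of concavity C ≥ 1. Let p₁, p₂ ∈ E be projections and r ∈ M a projection such that p₁ ≤ r and r − p₁ is equivalent to a subprojection of p₂, i.e. there exists u ∈ M with u*u = r − p₁ and uu* ≤ p₂. Then r ∈ E and ‖r‖_E ≤ C(‖p₁‖_E + ‖p₂‖_E). -/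
set_option synthInstance.maxHeartbeats 1000000

/-!
Since `u * star u ≤ p₂` for a projection `p₂`, the element `u` is a contraction with `p₂ * u = u`.
Hence `r - p₁ = star u * p₂ * u` lies in the bimodule, with quasi-norm at most that of `p₂`, and the
quasi-triangle inequality applied to `r = p₁ + (r - p₁)` gives the bound.
-/

theorem mul_mul_star_self_eq_mul_star_self_iff {A : Type*} [NonUnitalNormedRing A] [StarRing A]
    [CStarRing A] {a x : A} : a * (x * star x) = x * star x ↔ a * x = x := by
  refine ⟨fun h => ?_, fun h => by rw [← mul_assoc, h]⟩
  rw [← sub_eq_zero, ← CStarRing.mul_star_self_eq_zero_iff]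
  calc (a * x - x) * star (a * x - x)
      = (a * (x * star x) - x * star x) * star a - (a * (x * star x) - x * star x) := by
        simp only [star_sub, star_mul]
        noncomm_ring
    _ = 0 := by rw [h, sub_self, zero_mul, sub_zero]

section CStarAlgebra

variable {A : Type*} [NonUnitalCStarAlgebra A] [PartialOrder A] [StarOrderedRing A] {p u : A}

theorem norm_sq_le_norm_of_mul_star_self_le (hup : u * star u ≤ p) : ‖u‖ ^ 2 ≤ ‖p‖ := by
  rw [sq, ← CStarRing.norm_self_mul_star]
  exact CStarAlgebra.norm_le_norm_of_nonneg_of_le (mul_star_self_nonneg u) hup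

theorem norm_le_one_of_mul_star_self_le (hp : ‖p‖ ≤ 1) (hup : u * star u ≤ p) : ‖u‖ ≤ 1 :=
  (sq_le_one_iff₀ (norm_nonneg u)).mp ((norm_sq_le_norm_of_mul_star_self_le hup).trans hp)

theorem mul_eq_right_of_mul_star_self_le (hp : IsStarProjection p) (hup : u * star u ≤ p) :
    p * u = u :=
  mul_mul_star_self_eq_mul_star_self_iff.mp
    (hp.mul_right_and_mul_left_of_nonneg_of_le (mul_star_self_nonneg u) hup).2

theorem star_mul_mul_eq_star_mul_self_of_mul_star_self_le (hp : IsStarProjection p)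
    (hup : u * star u ≤ p) : star u * p * u = star u * u := by
  rw [mul_assoc, mul_eq_right_of_mul_star_self_le hp hup]

variable {S : Type*} [SetLike S A] [StarMemClass S A] {M : S} {E : Set A} {nE : A → ℝ}

theorem star_mul_self_mem_of_mul_star_self_le
    (hE_bimod : ∀ a ∈ M, ∀ b ∈ M, ∀ x ∈ E, a * x * b ∈ E)
    (hp : IsStarProjection p) (hpE : p ∈ E) (hu : u ∈ M) (hup : u * star u ≤ p) :
    star u * u ∈ E := by
  rw [← star_mul_mul_eq_star_mul_self_of_mul_star_self_le hp hup]
  exact hE_bimod _ (star_mem hu) _ hu _ hpE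

theorem quasiNorm_star_mul_self_le_of_mul_star_self_le
    (hn_nonneg : ∀ x ∈ E, 0 ≤ nE x)
    (hn_bimod : ∀ a ∈ M, ∀ b ∈ M, ∀ x ∈ E, nE (a * x * b) ≤ ‖a‖ * ‖b‖ * nE x)
    (hp : IsStarProjection p) (hpE : p ∈ E) (hu : u ∈ M) (hup : u * star u ≤ p) :
    nE (star u * u) ≤ nE p := by
  have hu_norm : ‖u‖ ≤ 1 := norm_le_one_of_mul_star_self_le (IsStarProjection.norm_le p hp) hup
  calc nE (star u * u)
      = nE (star u * p * u) := by rw [star_mul_mul_eq_star_mul_self_of_mul_star_self_le hp hup]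
    _ ≤ ‖star u‖ * ‖u‖ * nE p := hn_bimod _ (star_mem hu) _ hu _ hpE
    _ = ‖u‖ * ‖u‖ * nE p := by rw [norm_star]
    _ ≤ nE p := mul_le_of_le_one_left (hn_nonneg p hpE)
        (mul_le_one₀ hu_norm (norm_nonneg u) hu_norm)

theorem quasiNormed_bimodule_sup_projection_bound_general {C : ℝ} (hC : 0 ≤ C)
    (hE_add : ∀ x ∈ E, ∀ y ∈ E, x + y ∈ E)
    (hE_bimod : ∀ a ∈ M, ∀ b ∈ M, ∀ x ∈ E, a * x * b ∈ E)
    (hn_nonneg : ∀ x ∈ E, 0 ≤ nE x)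
    (hn_add : ∀ x ∈ E, ∀ y ∈ E, nE (x + y) ≤ C * (nE x + nE y))
    (hn_bimod : ∀ a ∈ M, ∀ b ∈ M, ∀ x ∈ E, nE (a * x * b) ≤ ‖a‖ * ‖b‖ * nE x)
    {p₁ p₂ r : A} (hp₁E : p₁ ∈ E) (hp₂E : p₂ ∈ E) (hp₂ : IsStarProjection p₂)
    (hu : u ∈ M) (hu₁ : star u * u = r - p₁) (hu₂ : u * star u ≤ p₂) :
    r ∈ E ∧ nE r ≤ C * (nE p₁ + nE p₂) := by
  obtain rfl : r = p₁ + star u * u := by rw [hu₁, add_sub_cancel]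
  have hmem : star u * u ∈ E := star_mul_self_mem_of_mul_star_self_le hE_bimod hp₂ hp₂E hu hu₂
  have hle : nE (star u * u) ≤ nE p₂ :=
    quasiNorm_star_mul_self_le_of_mul_star_self_le hn_nonneg hn_bimod hp₂ hp₂E hu hu₂
  refine ⟨hE_add _ hp₁E _ hmem, ?_⟩
  calc nE (p₁ + star u * u)
      ≤ C * (nE p₁ + nE (star u * u)) := hn_add _ hp₁E _ hmem
    _ ≤ C * (nE p₁ + nE p₂) := by gcongr

end CStarAlgebra

theorem quasiNormed_bimodule_sup_projection_bound
    (H : Type*) [NormedAddCommGroup H] [InnerProductSpace ℂ H] [CompleteSpace H]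
    (M : VonNeumannAlgebra H)
    (E : Set (H →L[ℂ] H)) (nE : (H →L[ℂ] H) → ℝ) (C : ℝ) (hC : 1 ≤ C)
    (hE_sub : E ⊆ (M : Set (H →L[ℂ] H)))
    (hE_zero : (0 : H →L[ℂ] H) ∈ E)
    (hE_add : ∀ x ∈ E, ∀ y ∈ E, x + y ∈ E)
    (hE_smul : ∀ (α : ℂ), ∀ x ∈ E, α • x ∈ E)
    (hE_bimod : ∀ a ∈ M, ∀ b ∈ M, ∀ x ∈ E, a * x * b ∈ E)
    (hn_nonneg : ∀ x ∈ E, 0 ≤ nE x)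
    (hn_def : ∀ x ∈ E, (nE x = 0 ↔ x = 0))
    (hn_smul : ∀ (α : ℂ), ∀ x ∈ E, nE (α • x) = ‖α‖ * nE x)
    (hn_add : ∀ x ∈ E, ∀ y ∈ E, nE (x + y) ≤ C * (nE x + nE y))
    (hn_bimod : ∀ a ∈ M, ∀ b ∈ M, ∀ x ∈ E, nE (a * x * b) ≤ ‖a‖ * ‖b‖ * nE x)
    (p₁ p₂ : H →L[ℂ] H) (hp₁E : p₁ ∈ E) (hp₂E : p₂ ∈ E)
    (hp₁_idem : p₁ * p₁ = p₁) (hp₁_sa : star p₁ = p₁)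
    (hp₂_idem : p₂ * p₂ = p₂) (hp₂_sa : star p₂ = p₂)
    (r : H →L[ℂ] H) (hrM : r ∈ M) (hr_idem : r * r = r) (hr_sa : star r = r)
    (hp₁r : p₁ ≤ r)
    (u : H →L[ℂ] H) (huM : u ∈ M) (hu₁ : star u * u = r - p₁) (hu₂ : u * star u ≤ p₂) :
    r ∈ E ∧ nE r ≤ C * (nE p₁ + nE p₂) := by
  exact quasiNormed_bimodule_sup_projection_bound_general (zero_le_one.trans hC) hE_add hE_bimod
    hn_nonneg hn_add hn_bimod hp₁E hp₂E ⟨hp₂_idem, hp₂_sa⟩ huM hu₁ hu₂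
end

section
/- Let (Ω, Σ, μ) be a finite measure space and let E be a complex linear subspace of L⁰(μ) (the space of μ-a.e. equivalence classes of complex-valued measurable functions on Ω), equipped with a quasi-norm ‖·‖_E with modulus of concavity C ≥ 1 which is solid: whenever h ∈ L⁰(μ), f ∈ E and |h| ≤ |f| μ-a.e., then h ∈ E and ‖h‖_E ≤ ‖f‖_E. If (a_n) is a sequence in E with ‖a_n‖_E → 0, then a_n → 0 in measure μ, i.e. for every ε > 0, μ{ω : |a_n(ω)| > ε} → 0 as n → ∞. -/
open MeasureTheory Filter

/-!
A solid quasi-norm `N` induces the set function `ν S = N (1_S e)` for a fixed vector `e ≠ 0`. It is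
monotone, quasi-subadditive, and only `μ`-null sets are `ν`-null; this makes `μ` absolutely
continuous with respect to `ν` in the `ε`-`δ` sense. Otherwise there are sets `A m` with
`μ (A m) ≥ ε` and `ν (A m)` decaying so fast that every finite union of `A m, A (m + 1), …` has
`ν`-value at most `t ^ m`, where `t < 1`. Nothing is known about `ν` of a countable union, but since
`μ` is finite, each tail union is exhausted by a finite one up to a small `μ`-error. The
intersection of these finite unions approximates `limsup A` in measure, so it is not `μ`-null,
although it is `ν`-null. If `‖e‖ ≤ r`, solidity gives `ν {ω | r < ‖f ω‖} ≤ N f`, so `N f` controls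
`μ {ω | r < ‖f ω‖}`.
-/

open Set
open scoped ENNReal NNReal Topology

section LimsupOfSets

variable {Ω : Type*} [MeasurableSpace Ω] {μ : Measure Ω}

theorem exists_measure_iUnion_sdiff_accumulate_lt {A : ℕ → Set Ω}
    (hA : ∀ i, MeasurableSet (A i)) (hfin : μ (⋃ i, A i) ≠ ∞) {ε : ℝ≥0∞} (hε : ε ≠ 0) :
    ∃ j, μ ((⋃ i, A i) \ accumulate A j) < ε := by
  have hlim : Tendsto (fun j => μ (accumulate A j) + ε) atTop (𝓝 (μ (⋃ i, A i) + ε)) :=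
    tendsto_measure_iUnion_accumulate.add_const ε
  obtain ⟨j, hj⟩ := (hlim.eventually_const_lt (ENNReal.lt_add_right hfin hε)).exists
  have hmeas : MeasurableSet (accumulate A j) := .biUnion (to_countable _) fun i _ => hA i
  have hsub : accumulate A j ⊆ ⋃ i, A i := accumulate_subset_iUnion j
  exact ⟨j, measure_sdiff_lt_of_lt_add hmeas.nullMeasurableSet hsub
    (measure_ne_top_of_subset hsub hfin) hj⟩

variable [IsFiniteMeasure μ]

theorem le_measure_limsup_of_frequently_le {A : ℕ → Set Ω} (hA : ∀ n, MeasurableSet (A n))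
    {ε : ℝ≥0∞} (hε : ∃ᶠ n in atTop, ε ≤ μ (A n)) : ε ≤ μ (limsup A atTop) := by
  have hanti : Antitone fun m => ⋃ n ≥ m, A n :=
    fun _ _ hkm => biUnion_mono (fun _ hn => hkm.trans hn) fun _ _ => Subset.rfl
  have hmeas (m : ℕ) : MeasurableSet (⋃ n ≥ m, A n) := .biUnion (to_countable _) fun n _ => hA n
  rw [limsup_eq_iInf_iSup_of_nat]
  simp only [iSup_eq_iUnion, iInf_eq_iInter]
  rw [hanti.measure_iInter (fun m => (hmeas m).nullMeasurableSet) ⟨0, measure_ne_top _ _⟩]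
  refine le_iInf fun m => ?_
  obtain ⟨n, hmn, hn⟩ := frequently_atTop.1 hε m
  exact hn.trans (measure_mono (subset_biUnion_of_mem (u := A) hmn))

theorem exists_measure_limsup_sdiff_iInter_accumulate_lt {A : ℕ → Set Ω}
    (hA : ∀ n, MeasurableSet (A n)) {ε : ℝ≥0∞} (hε : ε ≠ 0) :
    ∃ j : ℕ → ℕ, μ (limsup A atTop \ ⋂ m, accumulate (fun i => A (i + m)) (j m)) < ε := by
  obtain ⟨η, hη_pos, hη_sum⟩ := ENNReal.exists_pos_sum_of_countable' hε ℕ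
  choose j hj using fun m => exists_measure_iUnion_sdiff_accumulate_lt
    (fun i => hA (i + m)) (measure_ne_top μ _) (hη_pos m).ne'
  have hlimsup (m : ℕ) : limsup A atTop ⊆ ⋃ i, A (i + m) := by
    rw [limsup_eq_iInf_iSup_of_nat']
    exact iInter_subset _ m
  refine ⟨j, ?_⟩
  calc μ (limsup A atTop \ ⋂ m, accumulate (fun i => A (i + m)) (j m))
      ≤ μ (⋃ m, (⋃ i, A (i + m)) \ accumulate (fun i => A (i + m)) (j m)) := by
        rw [sdiff_iInter]
        exact measure_mono (iUnion_mono fun m => sdiff_subset_sdiff_left (hlimsup m))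
    _ ≤ ∑' m, μ ((⋃ i, A (i + m)) \ accumulate (fun i => A (i + m)) (j m)) := measure_iUnion_le _
    _ ≤ ∑' m, η m := ENNReal.tsum_le_tsum fun m => (hj m).le
    _ < ε := hη_sum

end LimsupOfSets

/-- A quasi-submeasure: a set function that is monotone and subadditive up to the constant `C` on
measurable sets. Its values on non-measurable sets are irrelevant. -/
structure IsQuasiSubmeasure {Ω : Type*} [MeasurableSpace Ω] (ν : Set Ω → ℝ≥0∞) (C : ℝ≥0) :
    Prop where
  mono : ∀ {S T}, MeasurableSet S → MeasurableSet T → S ⊆ T → ν S ≤ ν T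
  union_le : ∀ {S T}, MeasurableSet S → MeasurableSet T → ν (S ∪ T) ≤ C * (ν S + ν T)

namespace IsQuasiSubmeasure

variable {Ω : Type*} [MeasurableSpace Ω] {ν : Set Ω → ℝ≥0∞} {C : ℝ≥0}

theorem accumulate_le (hν : IsQuasiSubmeasure ν C) {t : ℝ≥0} (ht : t ≤ 1) (hCt : 2 * C * t ≤ 1)
    {A : ℕ → Set Ω} (hA : ∀ i, MeasurableSet (A i)) {c : ℝ≥0∞}
    (hνA : ∀ i, ν (A i) ≤ c * t ^ (i + 1)) (j : ℕ) : ν (accumulate A j) ≤ c := by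
  induction j generalizing A c with
  | zero =>
    calc ν (accumulate A 0) ≤ c * t := by simpa using hνA 0
      _ ≤ c := mul_le_of_le_one_right' (mod_cast ht)
  | succ j ih =>
    have hsplit : accumulate A (j + 1) = A 0 ∪ accumulate (fun i => A (i + 1)) j :=
      biUnion_le_succ' A j
    have hmeas : MeasurableSet (accumulate (fun i => A (i + 1)) j) :=
      .biUnion (to_countable _) fun i _ => hA (i + 1)
    have hhead : ν (A 0) ≤ c * t := by simpa using hνA 0
    have htail : ν (accumulate (fun i => A (i + 1)) j) ≤ c * t :=
      ih (fun i => hA (i + 1)) fun i => (hνA (i + 1)).trans_eq (by ring)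
    calc ν (accumulate A (j + 1))
        ≤ C * (ν (A 0) + ν (accumulate (fun i => A (i + 1)) j)) :=
          hsplit ▸ hν.union_le (hA 0) hmeas
      _ ≤ C * (c * t + c * t) := by gcongr
      _ = c * (2 * C * t : ℝ≥0) := by push_cast; ring
      _ ≤ c := mul_le_of_le_one_right' (mod_cast hCt)

theorem exists_pos_forall_measure_lt (hν : IsQuasiSubmeasure ν C) {μ : Measure Ω}
    [IsFiniteMeasure μ] (hμν : ∀ S, MeasurableSet S → ν S = 0 → μ S = 0)
    {ε : ℝ≥0∞} (hε : ε ≠ 0) :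
    ∃ δ > 0, ∀ S, MeasurableSet S → ν S < δ → μ S < ε := by
  by_contra! hcon
  obtain ⟨t, ht_pos, ht_lt, hCt⟩ : ∃ t : ℝ≥0, 0 < t ∧ t < 1 ∧ 2 * C * t ≤ 1 := by
    refine ⟨(2 * C + 2)⁻¹, by positivity, inv_lt_one_of_one_lt₀ ?_, ?_⟩
    · exact one_lt_two.trans_le le_add_self
    · exact mul_inv_le_one_of_le₀ le_self_add zero_le
  choose A hA hνA hμA using fun n : ℕ =>
    hcon ((t : ℝ≥0∞) ^ (n + 1)) (ENNReal.pow_pos (mod_cast ht_pos) _)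
  obtain ⟨j, hj⟩ := exists_measure_limsup_sdiff_iInter_accumulate_lt (μ := μ) hA hε
  set V : ℕ → Set Ω := fun m => accumulate (fun i => A (i + m)) (j m)
  have hV (m : ℕ) : MeasurableSet (V m) := .biUnion (to_countable _) fun i _ => hA (i + m)
  have hνV (m : ℕ) : ν (V m) ≤ (t : ℝ≥0∞) ^ m :=
    hν.accumulate_le ht_lt.le hCt (fun i => hA (i + m))
      (fun i => (hνA (i + m)).le.trans_eq (by ring)) (j m)
  have hν_iInter : ν (⋂ m, V m) = 0 := by
    have hpow : Tendsto (fun m : ℕ => (t : ℝ≥0∞) ^ m) atTop (𝓝 0) :=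
      ENNReal.tendsto_pow_atTop_nhds_zero_of_lt_one (mod_cast ht_lt)
    exact le_zero_iff.1 <| ge_of_tendsto' hpow fun m =>
      (hν.mono (.iInter hV) (hV m) (iInter_subset V m)).trans (hνV m)
  have hμ_iInter : μ (⋂ m, V m) = 0 := hμν _ (.iInter hV) hν_iInter
  refine (le_measure_limsup_of_frequently_le hA (.of_forall hμA)).not_gt ?_
  rwa [measure_sdiff_null hμ_iInter] at hj

end IsQuasiSubmeasure

section Indicator

variable {Ω : Type*} [MeasurableSpace Ω] (μ : Measure Ω) {F : Type*} [NormedAddCommGroup F]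

open Classical in
/-- The class in `L⁰(μ)` of the function equal to `e` on `S` and to `0` elsewhere, with junk value
`0` if `S` is not measurable. -/
noncomputable def indicatorAEEqFun (S : Set Ω) (e : F) : Ω →ₘ[μ] F :=
  if hS : MeasurableSet S then
    AEEqFun.mk (S.indicator fun _ => e) (stronglyMeasurable_const.indicator hS).aestronglyMeasurable
  else 0

variable {S T : Set Ω}

theorem coeFn_indicatorAEEqFun (hS : MeasurableSet S) (e : F) :
    indicatorAEEqFun μ S e =ᵐ[μ] S.indicator fun _ => e := by
  rw [indicatorAEEqFun, dif_pos hS]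
  exact AEEqFun.coeFn_mk _ _

theorem indicatorAEEqFun_union_of_disjoint (hS : MeasurableSet S) (hT : MeasurableSet T)
    (hST : Disjoint S T) (e : F) :
    indicatorAEEqFun μ (S ∪ T) e = indicatorAEEqFun μ S e + indicatorAEEqFun μ T e := by
  refine AEEqFun.ext ?_
  filter_upwards [coeFn_indicatorAEEqFun μ hS e, coeFn_indicatorAEEqFun μ hT e,
    coeFn_indicatorAEEqFun μ (hS.union hT) e, AEEqFun.coeFn_add (indicatorAEEqFun μ S e)
      (indicatorAEEqFun μ T e)] with ω hωS hωT hω_union hω_add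
  rw [hω_union, hω_add, Pi.add_apply, hωS, hωT, indicator_union_of_disjoint hST]

variable {μ}

theorem measure_eq_zero_of_indicatorAEEqFun_eq_zero (hS : MeasurableSet S) {e : F} (he : e ≠ 0)
    (h : indicatorAEEqFun μ S e = 0) : μ S = 0 := by
  have hzero : S.indicator (fun _ => e) =ᵐ[μ] 0 :=
    (coeFn_indicatorAEEqFun μ hS e).symm.trans (h ▸ AEEqFun.coeFn_zero)
  simpa [Function.support_const he] using indicator_ae_eq_zero.1 hzero

theorem norm_indicatorAEEqFun_le_of_subset (hS : MeasurableSet S) (hT : MeasurableSet T)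
    (hST : S ⊆ T) (e : F) :
    ∀ᵐ ω ∂μ, ‖indicatorAEEqFun μ S e ω‖ ≤ ‖indicatorAEEqFun μ T e ω‖ := by
  filter_upwards [coeFn_indicatorAEEqFun μ hS e, coeFn_indicatorAEEqFun μ hT e] with ω hωS hωT
  rw [hωS, hωT]
  exact norm_indicator_le_of_subset hST _ ω

theorem measurableSet_lt_norm_coeFn (f : Ω →ₘ[μ] F) (ε : ℝ) : MeasurableSet {ω | ε < ‖f ω‖} :=
  measurableSet_lt measurable_const f.stronglyMeasurable.norm.measurable

theorem norm_indicatorAEEqFun_lt_norm_le (f : Ω →ₘ[μ] F) {ε : ℝ} {e : F} (he : ‖e‖ ≤ ε) :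
    ∀ᵐ ω ∂μ, ‖indicatorAEEqFun μ {ω | ε < ‖f ω‖} e ω‖ ≤ ‖f ω‖ := by
  filter_upwards [coeFn_indicatorAEEqFun μ (measurableSet_lt_norm_coeFn f ε) e] with ω hω
  rw [hω, norm_indicator_eq_indicator_norm]
  exact indicator_le' (fun ω hω => he.trans (le_of_lt hω)) (fun ω _ => norm_nonneg (f ω)) ω

end Indicator

/-- A solid function quasi-norm on `L⁰(μ)` with modulus of concavity `C`. It is defined on the whole
of `L⁰(μ)`; the space it belongs to is `{f | N f < ∞}`. Homogeneity is not part of the notion. -/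
structure IsFunctionQuasinorm {Ω : Type*} [MeasurableSpace Ω] {μ : Measure Ω} {F : Type*}
    [NormedAddCommGroup F] (N : (Ω →ₘ[μ] F) → ℝ≥0∞) (C : ℝ≥0) : Prop where
  eq_zero_of_map_eq_zero : ∀ {f}, N f = 0 → f = 0
  add_le : ∀ f g, N (f + g) ≤ C * (N f + N g)
  solid : ∀ {h f}, (∀ᵐ ω ∂μ, ‖h ω‖ ≤ ‖f ω‖) → N h ≤ N f

theorem IsFunctionQuasinorm.isQuasiSubmeasure {Ω : Type*} [MeasurableSpace Ω] {μ : Measure Ω}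
    {F : Type*} [NormedAddCommGroup F] {N : (Ω →ₘ[μ] F) → ℝ≥0∞} {C : ℝ≥0}
    (hN : IsFunctionQuasinorm N C) (e : F) :
    IsQuasiSubmeasure (fun S => N (indicatorAEEqFun μ S e)) C where
  mono hS hT hST := hN.solid (norm_indicatorAEEqFun_le_of_subset hS hT hST e)
  union_le {S T} hS hT := by
    have hTS : N (indicatorAEEqFun μ (T \ S) e) ≤ N (indicatorAEEqFun μ T e) :=
      hN.solid (norm_indicatorAEEqFun_le_of_subset (hT.diff hS) hT sdiff_subset e)
    calc N (indicatorAEEqFun μ (S ∪ T) e)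
        = N (indicatorAEEqFun μ S e + indicatorAEEqFun μ (T \ S) e) := by
          rw [← indicatorAEEqFun_union_of_disjoint μ hS (hT.diff hS) disjoint_sdiff_right,
            union_sdiff_self]
      _ ≤ C * (N (indicatorAEEqFun μ S e) + N (indicatorAEEqFun μ (T \ S) e)) := hN.add_le _ _
      _ ≤ C * (N (indicatorAEEqFun μ S e) + N (indicatorAEEqFun μ T e)) := by gcongr

theorem quasiNorm_tendsto_zero_implies_tendsto_in_measure_general
    {Ω : Type*} [MeasurableSpace Ω] {μ : Measure Ω} [IsFiniteMeasure μ]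
    {F : Type*} [NormedAddCommGroup F] [NeBot (𝓝[≠] (0 : F))]
    {N : (Ω →ₘ[μ] F) → ℝ≥0∞} {C : ℝ≥0} (hN : IsFunctionQuasinorm N C)
    {ι : Type*} {l : Filter ι} {a : ι → Ω →ₘ[μ] F} (ha : Tendsto (fun n => N (a n)) l (𝓝 0))
    {ε : ℝ} (hε : 0 < ε) :
    Tendsto (fun n => μ {ω | ε < ‖a n ω‖}) l (𝓝 0) := by
  obtain ⟨e, he_norm, he⟩ : ∃ e : F, ‖e‖ < ε ∧ e ≠ 0 := by
    have hball : ∀ᶠ e in 𝓝[≠] (0 : F), ‖e‖ < ε :=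
      eventually_nhdsWithin_of_eventually_nhds
        (continuous_norm.tendsto' 0 0 norm_zero |>.eventually_lt_const hε)
    exact (hball.and eventually_mem_nhdsWithin).exists
  refine ENNReal.tendsto_nhds_zero.2 fun η hη => ?_
  obtain ⟨δ, hδ, hμ⟩ := (hN.isQuasiSubmeasure e).exists_pos_forall_measure_lt
    (fun S hS hNS => measure_eq_zero_of_indicatorAEEqFun_eq_zero hS he
      (hN.eq_zero_of_map_eq_zero hNS)) hη.ne'
  filter_upwards [ha.eventually_lt_const hδ] with n hn
  have hN_le : N (indicatorAEEqFun μ {ω | ε < ‖a n ω‖} e) ≤ N (a n) :=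
    hN.solid (norm_indicatorAEEqFun_lt_norm_le (a n) he_norm.le)
  exact (hμ _ (measurableSet_lt_norm_coeFn (a n) ε) (hN_le.trans_lt hn)).le

section ExtendTop

open Classical in
/-- The extension of a real-valued functional on `E` by `∞` outside `E`; it turns a quasi-norm on a
subspace of `L⁰(μ)` into a functional on `L⁰(μ)`. -/
noncomputable def extendTop {X : Type*} (E : Set X) (nE : X → ℝ) (f : X) : ℝ≥0∞ :=
  if f ∈ E then ENNReal.ofReal (nE f) else ∞

variable {X : Type*} {E : Set X} {nE : X → ℝ}

theorem extendTop_of_mem {f : X} (hf : f ∈ E) : extendTop E nE f = ENNReal.ofReal (nE f) :=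
  if_pos hf

theorem extendTop_of_notMem {f : X} (hf : f ∉ E) : extendTop E nE f = ∞ :=
  if_neg hf

theorem extendTop_add_le [Add X] {C : ℝ} (hC : 0 < C) (hE_add : ∀ f ∈ E, ∀ g ∈ E, f + g ∈ E)
    (hn_add : ∀ f ∈ E, ∀ g ∈ E, nE (f + g) ≤ C * (nE f + nE g)) (f g : X) :
    extendTop E nE (f + g) ≤ C.toNNReal * (extendTop E nE f + extendTop E nE g) := by
  have hC_ne : (C.toNNReal : ℝ≥0∞) ≠ 0 := mod_cast (Real.toNNReal_pos.2 hC).ne'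
  by_cases hf : f ∈ E
  · by_cases hg : g ∈ E
    · rw [extendTop_of_mem hf, extendTop_of_mem hg, extendTop_of_mem (hE_add f hf g hg)]
      calc ENNReal.ofReal (nE (f + g))
          ≤ ENNReal.ofReal (C * (nE f + nE g)) := ENNReal.ofReal_le_ofReal (hn_add f hf g hg)
        _ = C.toNNReal * ENNReal.ofReal (nE f + nE g) := ENNReal.ofReal_mul hC.le
        _ ≤ C.toNNReal * (ENNReal.ofReal (nE f) + ENNReal.ofReal (nE g)) := by
          gcongr; exact ENNReal.ofReal_add_le
    · simp [extendTop_of_notMem hg, ENNReal.mul_top hC_ne]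
  · simp [extendTop_of_notMem hf, ENNReal.mul_top hC_ne]

theorem tendsto_extendTop_zero {ι : Type*} {l : Filter ι} {a : ι → X} (ha : ∀ n, a n ∈ E)
    (hconv : Tendsto (fun n => nE (a n)) l (𝓝 0)) :
    Tendsto (fun n => extendTop E nE (a n)) l (𝓝 0) := by
  simpa only [extendTop_of_mem (ha _), ENNReal.ofReal_zero] using ENNReal.tendsto_ofReal hconv

theorem isFunctionQuasinorm_extendTop {Ω : Type*} [MeasurableSpace Ω] {μ : Measure Ω}
    {F : Type*} [NormedAddCommGroup F] {E : Set (Ω →ₘ[μ] F)} {nE : (Ω →ₘ[μ] F) → ℝ} {C : ℝ}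
    (hC : 0 < C) (hE_add : ∀ f ∈ E, ∀ g ∈ E, f + g ∈ E)
    (hn_def : ∀ f ∈ E, nE f ≤ 0 → f = 0)
    (hn_add : ∀ f ∈ E, ∀ g ∈ E, nE (f + g) ≤ C * (nE f + nE g))
    (h_solid : ∀ h, ∀ f ∈ E, (∀ᵐ ω ∂μ, ‖h ω‖ ≤ ‖f ω‖) → h ∈ E ∧ nE h ≤ nE f) :
    IsFunctionQuasinorm (extendTop E nE) C.toNNReal where
  eq_zero_of_map_eq_zero {f} hf := by
    by_cases hfE : f ∈ E
    · rw [extendTop_of_mem hfE, ENNReal.ofReal_eq_zero] at hf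
      exact hn_def f hfE hf
    · exact absurd ((extendTop_of_notMem hfE).symm.trans hf) ENNReal.top_ne_zero
  add_le := extendTop_add_le hC hE_add hn_add
  solid {h f} hle := by
    by_cases hf : f ∈ E
    · obtain ⟨hh, hnh⟩ := h_solid h f hf hle
      rw [extendTop_of_mem hf, extendTop_of_mem hh]
      exact ENNReal.ofReal_le_ofReal hnh
    · exact le_top.trans_eq (extendTop_of_notMem hf).symm

end ExtendTop

/-- In a solid quasi-normed subspace `E` of `L⁰(μ)` over a finite measure space,
quasi-norm convergence to zero implies convergence in measure. -/
theorem quasiNorm_tendsto_zero_implies_tendsto_in_measure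
    (Ω : Type*) [MeasurableSpace Ω] (μ : Measure Ω) [IsFiniteMeasure μ]
    (E : Set (Ω →ₘ[μ] ℂ)) (nE : (Ω →ₘ[μ] ℂ) → ℝ) (C : ℝ) (hC : 1 ≤ C)
    (hE_zero : (0 : Ω →ₘ[μ] ℂ) ∈ E)
    (hE_add : ∀ f ∈ E, ∀ g ∈ E, f + g ∈ E)
    (hE_smul : ∀ (α : ℂ), ∀ f ∈ E, α • f ∈ E)
    (hn_nonneg : ∀ f ∈ E, 0 ≤ nE f)
    (hn_def : ∀ f ∈ E, (nE f = 0 ↔ f = 0))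
    (hn_smul : ∀ (α : ℂ), ∀ f ∈ E, nE (α • f) = ‖α‖ * nE f)
    (hn_add : ∀ f ∈ E, ∀ g ∈ E, nE (f + g) ≤ C * (nE f + nE g))
    (h_solid : ∀ (h : Ω →ₘ[μ] ℂ), ∀ f ∈ E,
      (∀ᵐ ω ∂μ, ‖h ω‖ ≤ ‖f ω‖) → h ∈ E ∧ nE h ≤ nE f)
    (a : ℕ → Ω →ₘ[μ] ℂ) (ha : ∀ n, a n ∈ E)
    (hconv : Tendsto (fun n => nE (a n)) atTop (nhds 0)) :
    ∀ ε : ℝ, 0 < ε →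
      Tendsto (fun n => μ {ω | ε < ‖a n ω‖}) atTop (nhds 0) := by
  have hN := isFunctionQuasinorm_extendTop (zero_lt_one.trans_le hC) hE_add
    (fun f hf hf0 => (hn_def f hf).1 (hf0.antisymm (hn_nonneg f hf))) hn_add h_solid
  exact fun _ => quasiNorm_tendsto_zero_implies_tendsto_in_measure_general hN
    (tendsto_extendTop_zero ha hconv)
end
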